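/- There is a constant C > 0 such that for every u₀ ∈ 𝒮(ℝ²) one has ‖D_x^{1/8} D_y^{1/8} U(t)u₀‖_{L⁴_{t,x,y}(ℝ×ℝ²)} ≤ C ‖u₀‖_{L²(ℝ²)}, where D_x^{1/8} and D_y^{1/8} are the Fourier multipliers with symbols |ξ|^{1/8} and |η|^{1/8} respectively. -/

import Mathlib

/-!
Put `U = D_x^{1/8} D_y^{1/8} U(t) u₀`, a superposition of the plane waves
`wave (t, x, y) (ξ, η) = e^{i(t(ξ³+η³)+xξ+yη)}` with density `|ξ|^{1/8} |η|^{1/8} û₀(ξ, η)`.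
Let `F̂(ζ) = ∫ wave v ζ F v dv` (`waveFT`). By duality the `L² → L⁴` bound follows from the
restriction estimate
`∫ |ξ|^{1/4} |η|^{1/4} |F̂(ξ, η)|² dξ dη ≤ C E^{3/2}` for `F = conj U · |U|²` on a set `S` where `U`
is bounded below, with `E = ∫_S |U|⁴`: then `E = ∫ U F` gives `E² ≤ ‖û₀‖₂² · C E^{3/2}` by
Cauchy–Schwarz (`dual_bound`), and `S` exhausts `{U ≠ 0}` (`dual_full`). The norm `‖û₀‖₂` is
bounded by Bessel's inequality (`fxy2_plancherel`).

The restriction estimate (`weighted_full`) comes from Stein's complex interpolation. The form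
`∫ |ξ|^{1/4} |η|^{1/4} |F̂|²` is embedded in the analytic family (`trilin`)
`∫∫∫ λ^{-2z} |ξ|^{z/2} |η|^{z/2} ψ(λ(t-t')) wave v ζ conj(wave v' ζ) f(v) h(v')`,
integrated over `v`, `v'`, over the scale `λ > 0` and over `ζ = (ξ, η)`. Here `ψ` is a combination
of Gaussians such that both `ψ` and its Fourier transform vanish to second order at `0`.

* On `Re z = 0` (`trilin_line0`), expand `ψ(λ(t-t')) = ∫ e^{iλω(t-t')} ψ̂(ω) dω`. The inner integral
  becomes a product of two space-time Fourier transforms at `(λω + ξ³ + η³, ξ, η)`. Bessel's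
  inequality, a shear in the time frequency and `∫ |ψ̂(ω)| dω / |ω| < ∞` give the bound
  `C (‖f‖₂² + ‖h‖₂²)`.
* On `Re z = 1` (`trilin_line1`), the `λ`-integral is `O(|t-t'|)`, and the integrals in `ξ` and `η`
  of `|ξ|^{1/2+iγ} e^{i(tξ³+xξ)}` are each `O((1+|γ|) |t-t'|^{-1/2})` by van der Corput-type
  integration by parts (`airy_bound`). The kernel is therefore bounded, which gives
  `C (1+|Im z|)² ‖f‖₁ ‖h‖₁`.
* Hadamard's three lines theorem gives a bound at `z = 1/2` (`interp_bound`). There the scale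
  integral `∫ ψ(λτ) dλ/λ` converges to a nonzero constant `cpsi` independent of `τ ≠ 0`, so the
  family reduces to `cpsi` times the weighted quadratic form (`trilin_tendsto`, `limit_form_eq`,
  `weighted_band`).

All frequency and scale integrals are truncated to compact subsets of `(0, ∞)` in absolute value,
with bounds uniform in the truncation, so that the families are absolutely convergent and entire.
-/

noncomputable section

open MeasureTheory
open scoped ENNReal

/-- Spatial Fourier transform of a function of `(x, y)`. -/
def fxy2 (f : ℝ → ℝ → ℂ) (ξ η : ℝ) : ℂ :=
  ∫ x : ℝ, ∫ y : ℝ, Complex.exp (-Complex.I * ((x * ξ + y * η : ℝ) : ℂ)) * f x y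

/-- `D_x^{1/8} D_y^{1/8} U(t) u₀`, i.e. the Fourier multiplier
`|ξ|^{1/8} |η|^{1/8} e^{it(ξ³+η³)}` applied to `u₀`, written via the Fourier
inversion formula (up to a harmless normalization constant which is absorbed
in the constant `C`). -/
def DxDyU (f : ℝ → ℝ → ℂ) (t x y : ℝ) : ℂ :=
  ∫ ξ : ℝ, ∫ η : ℝ,
    Complex.exp (Complex.I * ((t * (ξ ^ 3 + η ^ 3) + x * ξ + y * η : ℝ) : ℂ)) *
      ((|ξ| ^ ((1 : ℝ) / 8) * |η| ^ ((1 : ℝ) / 8) : ℝ) : ℂ) * fxy2 f ξ η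

/-- L⁴ norm over all of `ℝ × ℝ²`. -/
def l4norm3 (w : ℝ → ℝ → ℝ → ℂ) : ℝ≥0∞ :=
  (∫⁻ v : ℝ × ℝ × ℝ, (‖w v.1 v.2.1 v.2.2‖₊ : ℝ≥0∞) ^ (4 : ℝ)) ^ ((1 : ℝ) / 4)

/-- L² norm on `ℝ²`. -/
def l2norm2 (f : ℝ → ℝ → ℂ) : ℝ≥0∞ :=
  (∫⁻ z : ℝ × ℝ, (‖f z.1 z.2‖₊ : ℝ≥0∞) ^ (2 : ℝ)) ^ ((1 : ℝ) / 2)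

/-! ### Bessel inequalities for exponential kernels -/

/-- The operator with kernel `e` satisfies an `L²` bound with squared constant `c`, tested on
integrable functions so that the defining integral converges absolutely. -/
def BesselOn {W Y : Type*} [MeasureSpace W] [MeasureSpace Y] (e : W → Y → ℂ) (c : ℝ≥0∞) : Prop :=
  ∀ f : Y → ℂ, Measurable f → Integrable f →
    ∫⁻ w, ‖∫ y, e w y * f y‖ₑ ^ 2 ≤ c * ∫⁻ y, ‖f y‖ₑ ^ 2

/-- Bessel inequalities tensorize; applied twice to the one-dimensional case they give the two- and
three-dimensional ones. -/
theorem BesselOn.prod {W₁ W₂ Y₁ Y₂ : Type*} [MeasureSpace W₁] [MeasureSpace W₂]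
    [MeasureSpace Y₁] [MeasureSpace Y₂] [SFinite (volume : Measure W₁)]
    [SFinite (volume : Measure W₂)] [SFinite (volume : Measure Y₁)]
    [SFinite (volume : Measure Y₂)]
    {e₁ : W₁ → Y₁ → ℂ} {e₂ : W₂ → Y₂ → ℂ} {c₁ c₂ : ℝ≥0∞}
    (h₁ : BesselOn e₁ c₁) (h₂ : BesselOn e₂ c₂)
    (m₁ : Measurable (Function.uncurry e₁)) (m₂ : Measurable (Function.uncurry e₂))
    (n₁ : ∀ w y, ‖e₁ w y‖ = 1) (n₂ : ∀ w y, ‖e₂ w y‖ = 1) :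
    BesselOn (fun (w : W₁ × W₂) (y : Y₁ × Y₂) => e₁ w.1 y.1 * e₂ w.2 y.2) (c₁ * c₂) := by
  intro f fm fi
  have hmul : ∀ w₂, Integrable (fun y : Y₁ × Y₂ => e₂ w₂ y.2 * f y) := fun w₂ => by
    refine fi.bdd_mul (c := 1) ?_ ?_
    · exact (m₂.comp (measurable_const.prodMk measurable_snd)).aestronglyMeasurable
    · exact Filter.Eventually.of_forall fun y => (n₂ _ _).le
  have hmul' : ∀ w : W₁ × W₂,
      Integrable (fun y : Y₁ × Y₂ => e₁ w.1 y.1 * e₂ w.2 y.2 * f y) := fun w => by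
    have : (fun y : Y₁ × Y₂ => e₁ w.1 y.1 * e₂ w.2 y.2 * f y)
      = fun y : Y₁ × Y₂ => e₁ w.1 y.1 * (e₂ w.2 y.2 * f y) := by ext; ring
    rw [this]
    refine (hmul w.2).bdd_mul (c := 1) ?_ ?_
    · exact (m₁.comp (measurable_const.prodMk measurable_fst)).aestronglyMeasurable
    · exact Filter.Eventually.of_forall fun y => (n₁ _ _).le
  set h : W₂ × Y₁ → ℂ := fun p => ∫ y₂, e₂ p.1 y₂ * f (p.2, y₂) with hh
  have hm : Measurable h := by
    refine StronglyMeasurable.measurable ?_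
    refine StronglyMeasurable.integral_prod_right (f := fun (p : W₂ × Y₁) y₂ => e₂ p.1 y₂ * f (p.2, y₂)) ?_
    refine Measurable.stronglyMeasurable ?_
    exact (m₂.comp ((measurable_fst.comp measurable_fst).prodMk measurable_snd)).mul
      (fm.comp ((measurable_snd.comp measurable_fst).prodMk measurable_snd))
  have heq : ∀ w : W₁ × W₂, ∫ y : Y₁ × Y₂, e₁ w.1 y.1 * e₂ w.2 y.2 * f y
      = ∫ y₁, e₁ w.1 y₁ * h (w.2, y₁) := fun w => by
    rw [Measure.volume_eq_prod, integral_prod _ (by simpa [Measure.volume_eq_prod] using hmul' w)]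
    refine integral_congr_ae (Filter.Eventually.of_forall fun y₁ => ?_)
    simp only [hh]
    rw [← integral_const_mul]
    simp only [mul_assoc]
  have hmeas : Measurable fun w : W₁ × W₂ => ‖∫ y₁, e₁ w.1 y₁ * h (w.2, y₁)‖ₑ ^ 2 := by
    refine (Measurable.enorm ?_).pow_const _
    refine StronglyMeasurable.measurable ?_
    refine StronglyMeasurable.integral_prod_right
      (f := fun (w : W₁ × W₂) y₁ => e₁ w.1 y₁ * h (w.2, y₁)) ?_
    refine Measurable.stronglyMeasurable ?_
    exact (m₁.comp ((measurable_fst.comp measurable_fst).prodMk measurable_snd)).mul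
      (hm.comp ((measurable_snd.comp measurable_fst).prodMk measurable_snd))
  simp_rw [heq]
  rw [Measure.volume_eq_prod W₁ W₂, lintegral_prod_symm _ hmeas.aemeasurable]
  calc ∫⁻ w₂, ∫⁻ w₁, ‖∫ y₁, e₁ w₁ y₁ * h (w₂, y₁)‖ₑ ^ 2
      ≤ ∫⁻ w₂, c₁ * ∫⁻ y₁, ‖h (w₂, y₁)‖ₑ ^ 2 := by
        refine lintegral_mono fun w₂ => h₁ _ (hm.comp measurable_prodMk_left) ?_
        have := hmul w₂
        rw [Measure.volume_eq_prod] at this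
        exact this.integral_prod_left
    _ = c₁ * ∫⁻ y₁, ∫⁻ w₂, ‖h (w₂, y₁)‖ₑ ^ 2 := by
        rw [lintegral_const_mul _ (Measurable.lintegral_prod_right' (f := fun p => ‖h p‖ₑ ^ 2)
          (hm.enorm.pow_const _))]
        rw [lintegral_lintegral_swap (hm.enorm.pow_const _).aemeasurable]
    _ ≤ c₁ * ∫⁻ y₁, c₂ * ∫⁻ y₂, ‖f (y₁, y₂)‖ₑ ^ 2 := by
        gcongr 1
        refine lintegral_mono_ae ?_
        rw [Measure.volume_eq_prod] at fi
        filter_upwards [fi.prod_right_ae] with y₁ hy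
        exact h₂ _ (fm.comp measurable_prodMk_left) hy
    _ = c₁ * c₂ * ∫⁻ y, ‖f y‖ₑ ^ 2 := by
        have hf2 : Measurable fun y => ‖f y‖ₑ ^ 2 := fm.enorm.pow_const _
        rw [lintegral_const_mul _ (Measurable.lintegral_prod_right' (f := fun p => ‖f p‖ₑ ^ 2) hf2),
          Measure.volume_eq_prod, lintegral_prod _ hf2.aemeasurable, mul_assoc]

theorem gauss_ft (b : ℝ) (hb : 0 < b) (s : ℝ) :
    ∫ ξ : ℝ, Complex.exp (Complex.I * ((s * ξ : ℝ) : ℂ)) * ((Real.exp (-b * ξ ^ 2) : ℝ) : ℂ)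
      = (((Real.pi / b) ^ (1 / 2 : ℝ) * Real.exp (-s ^ 2 / (4 * b)) : ℝ) : ℂ) := by
  have h := fourierIntegral_gaussian (b := (b : ℂ)) (by simpa using hb) (s : ℂ)
  push_cast
  rw [Complex.ofReal_cpow (by positivity)]
  push_cast
  rw [← h]
  congr 1; ext ξ; congr 2; ring

/-- Bessel's inequality with a Gaussian weight. Expanding the square and integrating in `ξ` leaves
the form with positive kernel `G(x - x')`, where `G` is the Fourier transform of the weight; it is
controlled by Schur's test and `∫ G = 2π`. -/
theorem bessel_gauss (b : ℝ) (hb : 0 < b) (f : ℝ → ℂ) (fm : Measurable f) (fi : Integrable f) :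
    ∫⁻ ξ : ℝ, ENNReal.ofReal (Real.exp (-b * ξ ^ 2)) *
      ‖∫ x : ℝ, Complex.exp (Complex.I * ((x * ξ : ℝ) : ℂ)) * f x‖ₑ ^ 2
      ≤ ENNReal.ofReal (2 * Real.pi) * ∫⁻ x, ‖f x‖ₑ ^ 2 := by
  set F : ℝ → ℂ := fun ξ => ∫ x : ℝ, Complex.exp (Complex.I * ((x * ξ : ℝ) : ℂ)) * f x with hF
  have hFb : ∀ ξ, ‖F ξ‖ ≤ ∫ x, ‖f x‖ := fun ξ => by
    refine (norm_integral_le_integral_norm _).trans (le_of_eq ?_)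
    congr 1; ext x; rw [norm_mul, mul_comm Complex.I, Complex.norm_exp_ofReal_mul_I, one_mul]
  have hFm : Measurable F := by
    refine StronglyMeasurable.measurable ?_
    refine StronglyMeasurable.integral_prod_right
      (f := fun (ξ : ℝ) (x : ℝ) => Complex.exp (Complex.I * ((x * ξ : ℝ) : ℂ)) * f x) ?_
    refine Measurable.stronglyMeasurable ?_
    unfold Function.uncurry
    fun_prop
  have hg : Integrable (fun ξ : ℝ => Real.exp (-b * ξ ^ 2)) := integrable_exp_neg_mul_sq hb
  set G : ℝ → ℝ := fun s => (Real.pi / b) ^ (1 / 2 : ℝ) * Real.exp (-s ^ 2 / (4 * b)) with hG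
  have hG0 : ∀ s, 0 ≤ G s := fun s => by positivity
  have hGc : Continuous G := by rw [hG]; fun_prop
  have hGeven : ∀ s, G (-s) = G s := fun s => by simp [hG]
  have hGint : ∫⁻ s, ENNReal.ofReal (G s) = ENNReal.ofReal (2 * Real.pi) := by
    have e1 : ∀ s, G s = (Real.pi / b) ^ (1 / 2 : ℝ) * Real.exp (-(1 / (4 * b)) * s ^ 2) :=
      fun s => by simp only [hG]; congr 2; field_simp
    have hi : Integrable G := by
      have : G = fun s => (Real.pi / b) ^ (1 / 2 : ℝ) * Real.exp (-(1 / (4 * b)) * s ^ 2) :=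
        funext e1
      rw [this]
      exact (integrable_exp_neg_mul_sq (by positivity)).const_mul _
    rw [← ofReal_integral_eq_lintegral_ofReal hi (Filter.Eventually.of_forall hG0)]
    congr 1
    simp_rw [e1]
    rw [integral_const_mul, integral_gaussian, ← Real.sqrt_eq_rpow, ← Real.sqrt_mul (by positivity)]
    rw [show Real.pi / b * (Real.pi / (1 / (4 * b))) = (2 * Real.pi) ^ 2 by field_simp; ring]
    exact Real.sqrt_sq (by positivity)
  -- absolute convergence justifies interchanging the `ξ`-integral with the two `x`-integrals
  have hInt : Integrable (fun p : ℝ × (ℝ × ℝ) => Complex.exp (Complex.I * (((p.2.1 - p.2.2) * p.1 : ℝ) : ℂ)) *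
      (((Real.exp (-b * p.1 ^ 2) : ℝ) : ℂ) * (f p.2.1 * (starRingEnd ℂ) (f p.2.2)))) := by
    refine Integrable.bdd_mul (c := 1) ?_ ?_ ?_
    · have h2 : Integrable (fun q : ℝ × ℝ => f q.1 * (starRingEnd ℂ) (f q.2)) := by
        have fc : Integrable fun x => (starRingEnd ℂ) (f x) :=
          (integrable_norm_iff (Complex.continuous_conj.measurable.comp fm).aestronglyMeasurable).1
            (by simpa [Function.comp_def] using fi.norm)
        exact Integrable.mul_prod fi fc
      exact Integrable.mul_prod hg.ofReal h2
    · refine Measurable.aestronglyMeasurable ?_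
      fun_prop
    · refine Filter.Eventually.of_forall fun p => ?_
      rw [mul_comm Complex.I, Complex.norm_exp_ofReal_mul_I]
  have key : ((∫ ξ, Real.exp (-b * ξ ^ 2) * ‖F ξ‖ ^ 2 : ℝ) : ℂ)
      = ∫ q : ℝ × ℝ, (f q.1 * (starRingEnd ℂ) (f q.2)) * (G (q.1 - q.2) : ℂ) := by
    rw [← integral_complex_ofReal]
    have e1 : ∀ ξ : ℝ, ((Real.exp (-b * ξ ^ 2) * ‖F ξ‖ ^ 2 : ℝ) : ℂ) =
        ∫ q : ℝ × ℝ, Complex.exp (Complex.I * (((q.1 - q.2) * ξ : ℝ) : ℂ)) *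
      (((Real.exp (-b * ξ ^ 2) : ℝ) : ℂ) * (f q.1 * (starRingEnd ℂ) (f q.2))) := fun ξ => by
      have : ((‖F ξ‖ ^ 2 : ℝ) : ℂ) = F ξ * (starRingEnd ℂ) (F ξ) := by
        rw [Complex.mul_conj']; push_cast; rfl
      rw [Complex.ofReal_mul, this]
      simp only [hF]
      rw [← integral_conj, ← integral_prod_mul, ← integral_const_mul]
      congr 1; ext q
      simp only [map_mul, ← Complex.exp_conj, Complex.conj_I, Complex.conj_ofReal]
      rw [show Complex.I * (((q.1 - q.2) * ξ : ℝ) : ℂ) = Complex.I * ((q.1 * ξ : ℝ) : ℂ) + -Complex.I * ((q.2 * ξ : ℝ) : ℂ) by push_cast; ring, Complex.exp_add]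
      ring
    simp_rw [e1]
    rw [integral_integral_swap (by simpa [Function.uncurry_def, Measure.volume_eq_prod] using hInt)]
    congr 1; ext q
    have := gauss_ft b hb (q.1 - q.2)
    simp only [hG]
    rw [← this, ← integral_const_mul]
    congr 1; ext ξ; ring
  have hre : ∫⁻ ξ, ENNReal.ofReal (Real.exp (-b * ξ ^ 2)) * ‖F ξ‖ₑ ^ 2
      = ‖((∫ ξ, Real.exp (-b * ξ ^ 2) * ‖F ξ‖ ^ 2 : ℝ) : ℂ)‖ₑ := by
    have h0 : 0 ≤ ∫ ξ, Real.exp (-b * ξ ^ 2) * ‖F ξ‖ ^ 2 := integral_nonneg fun ξ => by positivity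
    rw [← ofReal_norm, Complex.norm_real, Real.norm_of_nonneg h0,
      ofReal_integral_eq_lintegral_ofReal]
    · refine lintegral_congr fun ξ => ?_
      rw [ENNReal.ofReal_mul (by positivity), ENNReal.ofReal_pow (by positivity), ofReal_norm]
    · have : (fun ξ => Real.exp (-b * ξ ^ 2) * ‖F ξ‖ ^ 2) = fun ξ => ‖F ξ‖ ^ 2 * Real.exp (-b * ξ ^ 2) := by
        ext; ring
      rw [this]
      refine hg.bdd_mul (c := (∫ x, ‖f x‖) ^ 2) (hFm.norm.pow_const 2).aestronglyMeasurable ?_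
      refine Filter.Eventually.of_forall fun ξ => ?_
      rw [norm_pow, norm_norm]
      gcongr
      exact hFb ξ
    · exact Filter.Eventually.of_forall fun ξ => by positivity
  rw [hre, key]
  refine (enorm_integral_le_lintegral_enorm _).trans ?_
  have fm2 : Measurable fun x => ‖f x‖ₑ ^ 2 := fm.enorm.pow_const _
  have hGm : Measurable fun q : ℝ × ℝ => ENNReal.ofReal (G (q.1 - q.2)) := by fun_prop
  have hm1 : Measurable fun q : ℝ × ℝ => ‖f q.1‖ₑ ^ 2 * ENNReal.ofReal (G (q.1 - q.2)) := by
    fun_prop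
  have hm2 : Measurable fun q : ℝ × ℝ => ‖f q.2‖ₑ ^ 2 * ENNReal.ofReal (G (q.1 - q.2)) := by
    fun_prop
  have young : ∀ a c : ℝ≥0∞, a * c ≤ 2⁻¹ * a ^ 2 + 2⁻¹ * c ^ 2 := fun a c => by
    have := ENNReal.young_inequality a c Real.HolderConjugate.two_two
    simp only [ENNReal.rpow_ofNat, div_eq_mul_inv] at this
    simpa [mul_comm, ENNReal.ofReal_ofNat] using this
  have hA : ∫⁻ q : ℝ × ℝ, ‖f q.1‖ₑ ^ 2 * ENNReal.ofReal (G (q.1 - q.2))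
      = ENNReal.ofReal (2 * Real.pi) * ∫⁻ x, ‖f x‖ₑ ^ 2 := by
    rw [Measure.volume_eq_prod, lintegral_prod _ hm1.aemeasurable]
    rw [← lintegral_const_mul _ fm2]
    refine lintegral_congr fun x => ?_
    dsimp only
    rw [lintegral_const_mul _ (by fun_prop), mul_comm, ← hGint]
    congr 1
    exact lintegral_sub_left_eq_self (fun s => ENNReal.ofReal (G s)) x
  have hB : ∫⁻ q : ℝ × ℝ, ‖f q.2‖ₑ ^ 2 * ENNReal.ofReal (G (q.1 - q.2))
      = ENNReal.ofReal (2 * Real.pi) * ∫⁻ x, ‖f x‖ₑ ^ 2 := by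
    rw [← hA, Measure.volume_eq_prod, ← lintegral_prod_swap]
    refine lintegral_congr fun q => ?_
    simp only [Prod.fst_swap, Prod.snd_swap]
    rw [← hGeven (q.2 - q.1), neg_sub]
  calc ∫⁻ q : ℝ × ℝ, ‖(f q.1 * (starRingEnd ℂ) (f q.2)) * (G (q.1 - q.2) : ℂ)‖ₑ
      ≤ ∫⁻ q : ℝ × ℝ, (2⁻¹ * (‖f q.1‖ₑ ^ 2 * ENNReal.ofReal (G (q.1 - q.2))) +
          2⁻¹ * (‖f q.2‖ₑ ^ 2 * ENNReal.ofReal (G (q.1 - q.2)))) := by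
        refine lintegral_mono fun q => ?_
        rw [enorm_mul, enorm_mul, RCLike.enorm_conj, ← ofReal_norm (G (q.1 - q.2) : ℂ),
          Complex.norm_real, Real.norm_of_nonneg (hG0 _), ← mul_assoc, ← mul_assoc, ← add_mul]
        gcongr
        exact young _ _
    _ = _ := by
        rw [lintegral_add_left (hm1.const_mul _),
          lintegral_const_mul _ hm1,
          lintegral_const_mul _ hm2, hA, hB, ← add_mul,
          ENNReal.inv_two_add_inv_two, one_mul]

/-- One-dimensional Bessel inequality, by letting the Gaussian weight tend to `1`. -/
theorem bessel1 : BesselOn (fun ξ x : ℝ => Complex.exp (Complex.I * ((x * ξ : ℝ) : ℂ)))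
    (ENNReal.ofReal (2 * Real.pi)) := by
  intro f fm fi
  set F : ℝ → ℂ := fun ξ => ∫ x : ℝ, Complex.exp (Complex.I * ((x * ξ : ℝ) : ℂ)) * f x with hF
  have hFm : Measurable F := by
    refine StronglyMeasurable.measurable ?_
    refine StronglyMeasurable.integral_prod_right
      (f := fun (ξ : ℝ) (x : ℝ) => Complex.exp (Complex.I * ((x * ξ : ℝ) : ℂ)) * f x) ?_
    refine Measurable.stronglyMeasurable ?_
    unfold Function.uncurry
    fun_prop
  have hlim : ∀ ξ, Filter.liminf (fun n : ℕ => ENNReal.ofReal (Real.exp (-(1 / ((n : ℝ) + 1)) * ξ ^ 2)) * ‖F ξ‖ₑ ^ 2) Filter.atTop = ‖F ξ‖ₑ ^ 2 := fun ξ => by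
    refine Filter.Tendsto.liminf_eq ?_
    have h1 : Filter.Tendsto (fun n : ℕ => Real.exp (-(1 / ((n : ℝ) + 1)) * ξ ^ 2)) Filter.atTop (nhds 1) := by
      have := (tendsto_one_div_add_atTop_nhds_zero_nat (𝕜 := ℝ)).neg.mul_const (ξ ^ 2)
      have := (Real.continuous_exp.tendsto _).comp this
      simpa [Function.comp_def] using this
    have h2 := ENNReal.tendsto_ofReal h1
    have h3 := ENNReal.Tendsto.mul_const (b := ‖F ξ‖ₑ ^ 2) h2 (Or.inl (by simp))
    simpa using h3
  calc ∫⁻ ξ, ‖F ξ‖ₑ ^ 2 = ∫⁻ ξ, Filter.liminf (fun n : ℕ => ENNReal.ofReal (Real.exp (-(1 / ((n : ℝ) + 1)) * ξ ^ 2)) * ‖F ξ‖ₑ ^ 2) Filter.atTop := by simp_rw [hlim]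
    _ ≤ Filter.liminf (fun n : ℕ => ∫⁻ ξ, ENNReal.ofReal (Real.exp (-(1 / ((n : ℝ) + 1)) * ξ ^ 2)) * ‖F ξ‖ₑ ^ 2) Filter.atTop := by
        refine lintegral_liminf_le fun n => ?_
        fun_prop
    _ ≤ _ := by
        refine Filter.liminf_le_of_frequently_le' (Filter.Frequently.of_forall fun n => ?_)
        exact bessel_gauss _ (by positivity) f fm fi

/-! ### The one-dimensional Airy-type oscillatory integral -/

/-- The integrand `ξ^s e^{i(tξ³+xξ)}` for `ξ > 0`, with `ξ^s` written as `exp (s log ξ)`. -/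
def airyInt (s : ℂ) (t x ξ : ℝ) : ℂ :=
  Complex.exp (s * (Real.log ξ : ℂ)) * Complex.exp (Complex.I * ((t * ξ ^ 3 + x * ξ : ℝ) : ℂ))

theorem norm_airyInt {s : ℂ} (hs : s.re = 1 / 2) (t x : ℝ) {ξ : ℝ} (hξ : 0 < ξ) :
    ‖airyInt s t x ξ‖ = √ξ := by
  rw [airyInt, norm_mul, mul_comm Complex.I, Complex.norm_exp_ofReal_mul_I, mul_one,
    Complex.norm_exp, Complex.re_mul_ofReal, hs, Real.sqrt_eq_rpow, Real.rpow_def_of_pos hξ]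
  ring_nf

theorem continuousOn_airyInt (s : ℂ) (t x : ℝ) : ContinuousOn (airyInt s t x) (Set.Ioi 0) := by
  unfold airyInt
  refine ContinuousOn.mul ?_ (by fun_prop)
  refine Complex.continuous_exp.comp_continuousOn (continuousOn_const.mul ?_)
  refine Complex.continuous_ofReal.comp_continuousOn ?_
  exact Real.continuousOn_log.mono fun y hy => (ne_of_gt hy)

/-- Integration by parts on an interval free of stationary points of the phase `ξ³ + xξ`, whose
derivative is `3ξ² + x`. -/
theorem airy_ibp {s : ℂ} (hs : s.re = 1 / 2) (x a b M : ℝ) (ha : 0 < a) (hab : a ≤ b)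
    (hp : ∀ ξ ∈ Set.Icc a b, 3 * ξ ^ 2 + x ≠ 0)
    (hA : ∀ ξ ∈ Set.Icc a b, √ξ / |3 * ξ ^ 2 + x| ≤ M)
    (hI : ∫ ξ in a..b, 1 / (√ξ * |3 * ξ ^ 2 + x|) ≤ M) :
    ‖∫ ξ in a..b, airyInt s 1 x ξ‖ ≤ (5 + |s.im|) * M := by
  set p : ℝ → ℝ := fun ξ => 3 * ξ ^ 2 + x with hpdef
  have hu : Set.uIcc a b = Set.Icc a b := Set.uIcc_of_le hab
  have hpos : ∀ ξ ∈ Set.Icc a b, 0 < ξ := fun ξ h => lt_of_lt_of_le ha h.1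
  have hpd : ∀ ξ, HasDerivAt p (6 * ξ) ξ := fun ξ => by
    have := (((hasDerivAt_id ξ).pow 2).const_mul 3).add_const x
    refine this.congr_deriv ?_
    simp; ring
  have hpc : Continuous p := by fun_prop
  have hsq : ContinuousOn (fun ξ : ℝ => √ξ) (Set.Icc a b) := Real.continuous_sqrt.continuousOn
  have hsq0 : ∀ ξ ∈ Set.Icc a b, √ξ ≠ 0 := fun ξ h => (Real.sqrt_pos.2 (hpos ξ h)).ne'
  -- the exact derivative of `√ξ / p` expresses `∫ √ξ · 6ξ / p²` through boundary terms and `hI`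
  have hAd : ∀ ξ ∈ Set.uIcc a b, HasDerivAt (fun ξ => √ξ / p ξ)
      (1 / 2 * (1 / (√ξ * p ξ)) - √ξ * (6 * ξ) / p ξ ^ 2) ξ := fun ξ h => by
    rw [hu] at h
    have h1 := (Real.hasDerivAt_sqrt (hpos ξ h).ne').div (hpd ξ) (hp ξ h)
    refine h1.congr_deriv ?_
    have := hsq0 ξ h
    have := hp ξ h
    have : p ξ ≠ 0 := this
    field_simp
  have c1 : ContinuousOn (fun ξ => 1 / (√ξ * p ξ)) (Set.Icc a b) :=
    continuousOn_const.div (hsq.mul hpc.continuousOn) fun ξ h => mul_ne_zero (hsq0 ξ h) (hp ξ h)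
  have c1' : ContinuousOn (fun ξ => 1 / (√ξ * |p ξ|)) (Set.Icc a b) :=
    continuousOn_const.div (hsq.mul hpc.abs.continuousOn)
      fun ξ h => mul_ne_zero (hsq0 ξ h) (abs_ne_zero.2 (hp ξ h))
  have c2 : ContinuousOn (fun ξ => √ξ * (6 * ξ) / p ξ ^ 2) (Set.Icc a b) :=
    (hsq.mul (by fun_prop)).div (hpc.pow 2).continuousOn fun ξ h => pow_ne_zero _ (hp ξ h)
  have i1 : IntervalIntegrable (fun ξ => 1 / (√ξ * p ξ)) volume a b :=
    ContinuousOn.intervalIntegrable (hu ▸ c1)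
  have i1' : IntervalIntegrable (fun ξ => 1 / (√ξ * |p ξ|)) volume a b :=
    ContinuousOn.intervalIntegrable (hu ▸ c1')
  have i2 : IntervalIntegrable (fun ξ => √ξ * (6 * ξ) / p ξ ^ 2) volume a b :=
    ContinuousOn.intervalIntegrable (hu ▸ c2)
  have hftc := intervalIntegral.integral_eq_sub_of_hasDerivAt hAd ((i1.const_mul _).sub i2)
  rw [intervalIntegral.integral_sub (i1.const_mul _) i2, intervalIntegral.integral_const_mul] at hftc
  have hle1 : ∫ ξ in a..b, 1 / (√ξ * p ξ) ≤ ∫ ξ in a..b, 1 / (√ξ * |p ξ|) := by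
    refine intervalIntegral.integral_mono_on hab i1 i1' fun ξ h => ?_
    refine (le_abs_self _).trans (le_of_eq ?_)
    rw [abs_div, abs_mul, abs_one, abs_of_nonneg (Real.sqrt_nonneg _)]
  have hAabs : ∀ ξ ∈ Set.Icc a b, |√ξ / p ξ| ≤ M := fun ξ h => by
    rw [abs_div, abs_of_nonneg (Real.sqrt_nonneg _)]; exact hA ξ h
  have ha' := abs_le.1 (hAabs a ⟨le_rfl, hab⟩)
  have hb' := abs_le.1 (hAabs b ⟨hab, le_rfl⟩)
  have hI' : ∫ ξ in a..b, 1 / (√ξ * |p ξ|) ≤ M := hI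
  have hJ : ∫ ξ in a..b, √ξ * (6 * ξ) / p ξ ^ 2 ≤ 5 / 2 * M := by linarith
  -- integrating by parts: `E / (i p)` differentiates to `E` plus terms bounded by `hI` and `hJ`
  set E : ℝ → ℂ := airyInt s 1 x with hE
  have hEd : ∀ ξ ∈ Set.Icc a b, HasDerivAt E (E ξ * (s / ξ + Complex.I * p ξ)) ξ := fun ξ h => by
    have hl : HasDerivAt (fun ξ : ℝ => (Real.log ξ : ℂ)) ((ξ⁻¹ : ℝ) : ℂ) ξ :=
      (Real.hasDerivAt_log (hpos ξ h).ne').ofReal_comp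
    have hq : HasDerivAt (fun ξ : ℝ => (1 * ξ ^ 3 + x * ξ : ℝ)) (p ξ) ξ := by
      have := (((hasDerivAt_id ξ).pow 3).const_mul 1).add ((hasDerivAt_id ξ).const_mul x)
      refine this.congr_deriv ?_
      simp [hpdef]
    have hq' := (hq.ofReal_comp.const_mul Complex.I).cexp
    have := (hl.const_mul s).cexp.mul hq'
    refine this.congr_deriv ?_
    simp only [hE, airyInt]
    push_cast
    field_simp
  have hBd : ∀ ξ ∈ Set.uIcc a b, HasDerivAt (fun ξ => E ξ / (Complex.I * p ξ))
      (E ξ + (E ξ * s / (ξ * (Complex.I * p ξ)) - E ξ * (6 * ξ) / (Complex.I * p ξ ^ 2))) ξ :=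
      fun ξ h => by
    rw [hu] at h
    have hp0 : (p ξ : ℂ) ≠ 0 := Complex.ofReal_ne_zero.2 (hp ξ h)
    have hx0 : (ξ : ℂ) ≠ 0 := Complex.ofReal_ne_zero.2 (hpos ξ h).ne'
    have h1 := (hEd ξ h).div ((hpd ξ).ofReal_comp.const_mul Complex.I)
      (mul_ne_zero Complex.I_ne_zero hp0)
    refine h1.congr_deriv ?_
    have hI0 := Complex.I_ne_zero
    push_cast
    field_simp
    ring
  have hEc : ContinuousOn E (Set.Icc a b) :=
    (continuousOn_airyInt s 1 x).mono fun ξ h => hpos ξ h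
  have hpcC : ContinuousOn (fun ξ => (p ξ : ℂ)) (Set.Icc a b) :=
    (Complex.continuous_ofReal.comp hpc).continuousOn
  have hR : ContinuousOn (fun ξ : ℝ => E ξ * s / (ξ * (Complex.I * p ξ))
      - E ξ * (6 * ξ) / (Complex.I * p ξ ^ 2)) (Set.Icc a b) := by
    refine ContinuousOn.sub (ContinuousOn.div (by fun_prop) (by fun_prop) ?_)
      (ContinuousOn.div (by fun_prop) (by fun_prop) ?_)
    · exact fun ξ h => mul_ne_zero (Complex.ofReal_ne_zero.2 (hpos ξ h).ne')
        (mul_ne_zero Complex.I_ne_zero (Complex.ofReal_ne_zero.2 (hp ξ h)))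
    · exact fun ξ h => mul_ne_zero Complex.I_ne_zero
        (pow_ne_zero _ (Complex.ofReal_ne_zero.2 (hp ξ h)))
  have iE : IntervalIntegrable E volume a b := ContinuousOn.intervalIntegrable (hu ▸ hEc)
  have iR := ContinuousOn.intervalIntegrable (μ := volume) (hu.symm ▸ hR)
  have hftc2 := intervalIntegral.integral_eq_sub_of_hasDerivAt hBd (iE.add iR)
  rw [intervalIntegral.integral_add iE iR] at hftc2
  have hEn : ∀ ξ ∈ Set.Icc a b, ‖E ξ‖ = √ξ := fun ξ h => norm_airyInt hs 1 x (hpos ξ h)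
  have hBn : ∀ ξ ∈ Set.Icc a b, ‖E ξ / (Complex.I * p ξ)‖ ≤ M := fun ξ h => by
    rw [norm_div, norm_mul, Complex.norm_I, one_mul, Complex.norm_real, hEn ξ h]
    exact hA ξ h
  have hsn : ‖s‖ ≤ 1 / 2 + |s.im| := by
    have := Complex.norm_le_abs_re_add_abs_im s
    rw [hs] at this
    simpa [abs_of_pos] using this
  have hRn : ‖∫ ξ in a..b, (E ξ * s / (ξ * (Complex.I * p ξ))
      - E ξ * (6 * ξ) / (Complex.I * p ξ ^ 2))‖ ≤
      ∫ ξ in a..b, (‖s‖ * (1 / (√ξ * |p ξ|)) + √ξ * (6 * ξ) / p ξ ^ 2) := by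
    refine intervalIntegral.norm_integral_le_of_norm_le hab ?_ ((i1'.const_mul _).add i2)
    refine Filter.Eventually.of_forall fun ξ h => ?_
    have h := Set.Ioc_subset_Icc_self h
    refine (norm_sub_le _ _).trans (le_of_eq ?_)
    have hx := hpos ξ h
    have h6' : ‖(6 : ℂ)‖ = 6 := by simp
    simp only [norm_div, norm_mul, norm_pow, h6', Complex.norm_I, one_mul, Complex.norm_real,
      hEn ξ h, Real.norm_eq_abs, sq_abs, abs_of_pos hx]
    congr 1
    have e : ξ = √ξ * √ξ := (Real.mul_self_sqrt hx.le).symm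
    have := hsq0 ξ h
    have : |p ξ| ≠ 0 := abs_ne_zero.2 (hp ξ h)
    nth_rewrite 2 [e]
    field_simp
  rw [intervalIntegral.integral_add (i1'.const_mul _) i2, intervalIntegral.integral_const_mul] at hRn
  have hM0 : 0 ≤ ∫ ξ in a..b, 1 / (√ξ * |p ξ|) :=
    intervalIntegral.integral_nonneg hab fun ξ h => by positivity
  have hfin : ‖s‖ * ∫ ξ in a..b, 1 / (√ξ * |p ξ|) ≤ (1 / 2 + |s.im|) * M := by
    gcongr
  have e : ∫ ξ in a..b, E ξ = (E b / (Complex.I * p b) - E a / (Complex.I * p a)) -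
      ∫ ξ in a..b, (E ξ * s / (ξ * (Complex.I * p ξ))
      - E ξ * (6 * ξ) / (Complex.I * p ξ ^ 2)) := by
    rw [← hftc2]; ring
  rw [e]
  have n1 := norm_sub_le (E b / (Complex.I * p b) - E a / (Complex.I * p a))
    (∫ ξ in a..b, (E ξ * s / (ξ * (Complex.I * p ξ))
      - E ξ * (6 * ξ) / (Complex.I * p ξ ^ 2)))
  have n2 := norm_sub_le (E b / (Complex.I * p b)) (E a / (Complex.I * p a))
  have n3 := hBn b ⟨hab, le_rfl⟩
  have n4 := hBn a ⟨le_rfl, hab⟩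
  linarith

theorem airy_trivial {s : ℂ} (hs : s.re = 1 / 2) (x a b B : ℝ) (ha : 0 < a) (hab : a ≤ b)
    (hB : √b * (b - a) ≤ B) : ‖∫ ξ in a..b, airyInt s 1 x ξ‖ ≤ B := by
  have := intervalIntegral.norm_integral_le_of_norm_le_const (a := a) (b := b)
    (f := airyInt s 1 x) (C := √b) fun ξ h => by
      rw [Set.uIoc_of_le hab] at h
      rw [norm_airyInt hs 1 x (ha.trans h.1)]
      exact Real.sqrt_le_sqrt h.2
  rw [abs_of_nonneg (sub_nonneg.2 hab)] at this
  exact this.trans hB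

/-- Splits an interval at `c`. The predicate `Q` carries an upper constraint on the right endpoint,
which allows a second split. -/
theorem airy_split {s : ℂ} (x c K₁ K₂ : ℝ) (hK₁ : 0 ≤ K₁) (hK₂ : 0 ≤ K₂) (Q : ℝ → Prop)
    (h₁ : ∀ a b, 0 < a → a ≤ b → b ≤ c → ‖∫ ξ in a..b, airyInt s 1 x ξ‖ ≤ K₁)
    (h₂ : ∀ a b, 0 < a → c ≤ a → a ≤ b → Q b → ‖∫ ξ in a..b, airyInt s 1 x ξ‖ ≤ K₂)
    (a b : ℝ) (ha : 0 < a) (hab : a ≤ b) (hQ : Q b) :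
    ‖∫ ξ in a..b, airyInt s 1 x ξ‖ ≤ K₁ + K₂ := by
  rcases le_total b c with hbc | hbc
  · linarith [h₁ a b ha hab hbc]
  rcases le_total c a with hca | hca
  · linarith [h₂ a b ha hca hab hQ]
  have hi : ∀ u v : ℝ, 0 < u → u ≤ v → IntervalIntegrable (airyInt s 1 x) volume u v :=
    fun u v hu huv => ContinuousOn.intervalIntegrable
      ((continuousOn_airyInt s 1 x).mono (by
        rw [Set.uIcc_of_le huv]; exact fun y hy => lt_of_lt_of_le hu hy.1))
  rw [← intervalIntegral.integral_add_adjacent_intervals (hi a c ha hca)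
    (hi c b (ha.trans_le hca) hbc)]
  exact (norm_add_le _ _).trans (add_le_add (h₁ a c ha hca le_rfl)
    (h₂ c b (ha.trans_le hca) le_rfl hbc hQ))

theorem integral_inv_sqrt (a b : ℝ) (ha : 0 < a) (hab : a ≤ b) :
    IntervalIntegrable (fun ξ => 1 / √ξ) volume a b ∧ ∫ ξ in a..b, 1 / √ξ = 2 * √b - 2 * √a := by
  have hc : ContinuousOn (fun ξ : ℝ => 1 / √ξ) (Set.uIcc a b) := by
    rw [Set.uIcc_of_le hab]
    exact continuousOn_const.div Real.continuous_sqrt.continuousOn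
      fun ξ h => (Real.sqrt_pos.2 (ha.trans_le h.1)).ne'
  refine ⟨hc.intervalIntegrable, ?_⟩
  refine intervalIntegral.integral_eq_sub_of_hasDerivAt (f := fun ξ => 2 * √ξ) (fun ξ h => ?_)
    hc.intervalIntegrable
  rw [Set.uIcc_of_le hab] at h
  have h0 : 0 < ξ := ha.trans_le h.1
  refine ((Real.hasDerivAt_sqrt h0.ne').const_mul 2).congr_deriv ?_
  have := (Real.sqrt_pos.2 h0).ne'
  field_simp

theorem integral_inv_mul_sqrt (a b : ℝ) (ha : 0 < a) (hab : a ≤ b) :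
    IntervalIntegrable (fun ξ => 1 / (ξ * √ξ)) volume a b ∧
      ∫ ξ in a..b, 1 / (ξ * √ξ) ≤ 2 / √a := by
  have hc : ContinuousOn (fun ξ : ℝ => 1 / (ξ * √ξ)) (Set.uIcc a b) := by
    rw [Set.uIcc_of_le hab]
    exact continuousOn_const.div (continuousOn_id.mul Real.continuous_sqrt.continuousOn)
      fun ξ h => mul_ne_zero (ha.trans_le h.1).ne' (Real.sqrt_pos.2 (ha.trans_le h.1)).ne'
  refine ⟨hc.intervalIntegrable, ?_⟩
  have := intervalIntegral.integral_eq_sub_of_hasDerivAt (f := fun ξ => -2 / √ξ)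
    (f' := fun ξ => 1 / (ξ * √ξ)) (a := a) (b := b) (fun ξ h => by
      rw [Set.uIcc_of_le hab] at h
      have h0 : 0 < ξ := ha.trans_le h.1
      have h1 := (Real.sqrt_pos.2 h0).ne'
      refine ((hasDerivAt_const ξ (-2 : ℝ)).div (Real.hasDerivAt_sqrt h0.ne') h1).congr_deriv ?_
      rw [Real.sq_sqrt h0.le]
      field_simp
      norm_num) hc.intervalIntegrable
  rw [this]
  have : 0 ≤ 2 / √b := by positivity
  have e1 : -2 / √b - -2 / √a = 2 / √a - 2 / √b := by ring
  rw [e1]; linarith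

theorem airy_inv_integrable (x a b : ℝ) (ha : 0 < a) (hab : a ≤ b)
    (hp : ∀ ξ ∈ Set.Icc a b, 3 * ξ ^ 2 + x ≠ 0) :
    IntervalIntegrable (fun ξ => 1 / (√ξ * |3 * ξ ^ 2 + x|)) volume a b := by
  refine ContinuousOn.intervalIntegrable ?_
  rw [Set.uIcc_of_le hab]
  refine continuousOn_const.div (by fun_prop) fun ξ h => ?_
  exact mul_ne_zero (Real.sqrt_pos.2 (ha.trans_le h.1)).ne' (abs_ne_zero.2 (hp ξ h))

/-- Bound without a large stationary point. -/
theorem airy_caseA {s : ℂ} (hs : s.re = 1 / 2) (x : ℝ) (hx : -3 ≤ x) (a b : ℝ) (ha : 0 < a)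
    (hab : a ≤ b) : ‖∫ ξ in a..b, airyInt s 1 x ξ‖ ≤ 14 * (1 + |s.im|) := by
  have h0 := abs_nonneg s.im
  refine (airy_split x 2 4 (2 * (5 + |s.im|)) (by norm_num) (by positivity) (fun _ => True)
    ?_ ?_ a b ha hab trivial).trans (by linarith)
  · intro a b ha hab hb
    refine airy_trivial hs x a b 4 ha hab ?_
    have : √b ≤ 2 := Real.sqrt_le_iff.2 ⟨by norm_num, by linarith⟩
    nlinarith [Real.sqrt_nonneg b]
  · intro a b ha h2 hab _
    have hpl : ∀ ξ ∈ Set.Icc a b, ξ ≤ 3 * ξ ^ 2 + x := fun ξ h => by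
      have : 2 ≤ ξ := h2.trans h.1
      nlinarith
    have hpos : ∀ ξ ∈ Set.Icc a b, 0 < ξ := fun ξ h => ha.trans_le h.1
    have hp : ∀ ξ ∈ Set.Icc a b, 3 * ξ ^ 2 + x ≠ 0 := fun ξ h =>
      ((hpos ξ h).trans_le (hpl ξ h)).ne'
    rw [mul_comm]
    refine airy_ibp hs x a b 2 ha hab hp (fun ξ h => ?_) ?_
    · have := hpos ξ h
      have h3 := hpl ξ h
      rw [abs_of_pos (this.trans_le h3), div_le_iff₀ (this.trans_le h3)]
      have : √ξ ≤ ξ := Real.sqrt_le_iff.2 ⟨this.le, by nlinarith [h2.trans h.1]⟩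
      linarith
    · obtain ⟨hi, hb⟩ := integral_inv_mul_sqrt a b ha hab
      refine (intervalIntegral.integral_mono_on hab (airy_inv_integrable x a b ha hab hp) hi
        fun ξ h => ?_).trans (hb.trans ?_)
      · have := hpos ξ h
        have h3 := hpl ξ h
        rw [abs_of_pos (this.trans_le h3), mul_comm ξ]
        gcongr
      · rw [div_le_iff₀ (Real.sqrt_pos.2 ha)]
        have : 1 ≤ √a := Real.one_le_sqrt.2 (by linarith)
        linarith

/-- Bound with a stationary point at `r ≥ 1`. -/
theorem airy_caseB {s : ℂ} (hs : s.re = 1 / 2) (r : ℝ) (hr : 1 ≤ r) (a b : ℝ) (ha : 0 < a)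
    (hab : a ≤ b) : ‖∫ ξ in a..b, airyInt s 1 (-3 * r ^ 2) ξ‖ ≤ 14 * (1 + |s.im|) := by
  have h0 := abs_nonneg s.im
  have hr0 : 0 < r := by linarith
  set q := √r with hq
  have hq1 : 1 ≤ q := Real.one_le_sqrt.2 hr
  have hq0 : 0 < q := by linarith
  have hqq : q * q = r := Real.mul_self_sqrt hr0.le
  set δ := 1 / q with hδ
  have hδ0 : 0 < δ := by positivity
  have hδq : δ * q = 1 := by rw [hδ]; field_simp
  have hδ1 : δ ≤ 1 := by rw [hδ, div_le_one hq0]; exact hq1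
  have hδr : δ * r = q := by rw [← hqq, ← mul_assoc, hδq, one_mul]
  have hfac : ∀ ξ : ℝ, 3 * ξ ^ 2 + -3 * r ^ 2 = 3 * ((ξ - r) * (ξ + r)) := fun ξ => by ring
  refine (airy_split _ (r + δ) (5 + |s.im| + 4) (5 + |s.im|) (by positivity) (by positivity)
    (fun _ => True) ?_ ?_ a b ha hab trivial).trans (by linarith)
  · intro a b ha hab hb
    refine airy_split _ (r - δ) (5 + |s.im|) 4 (by positivity) (by positivity)
      (fun b => b ≤ r + δ) ?_ ?_ a b ha hab hb
    · intro a b ha hab hb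
      have hpl : ∀ ξ ∈ Set.Icc a b, 3 * q ≤ |3 * ξ ^ 2 + -3 * r ^ 2| := fun ξ h => by
        have h1 : 0 < ξ := ha.trans_le h.1
        have h2 : δ ≤ r - ξ := by linarith [h.2]
        rw [hfac, abs_mul, abs_mul, abs_of_pos (by linarith : 0 < ξ + r), abs_sub_comm,
          abs_of_pos (by linarith : 0 < r - ξ), abs_of_pos (by norm_num : (0 : ℝ) < 3), ← hδr]
        gcongr <;> linarith
      have hp : ∀ ξ ∈ Set.Icc a b, 3 * ξ ^ 2 + -3 * r ^ 2 ≠ 0 := fun ξ h => by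
        have := hpl ξ h
        exact abs_pos.1 (by linarith)
      rw [← mul_one (5 + |s.im|)]
      have hsqle : ∀ ξ ∈ Set.Icc a b, √ξ ≤ q := fun ξ h => Real.sqrt_le_sqrt (by linarith [h.2])
      refine airy_ibp hs _ a b 1 ha hab hp (fun ξ h => ?_) ?_
      · rw [div_le_one (abs_pos.2 (hp ξ h))]
        linarith [hsqle ξ h, hpl ξ h]
      · obtain ⟨hi, hI⟩ := integral_inv_sqrt a b ha hab
        refine (intervalIntegral.integral_mono_on hab (airy_inv_integrable _ a b ha hab hp)
          (hi.const_mul (1 / (3 * q))) fun ξ h => ?_).trans ?_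
        · have h1 : 0 < √ξ := Real.sqrt_pos.2 (ha.trans_le h.1)
          have h2 := hpl ξ h
          rw [← one_div_mul_one_div, mul_comm]
          gcongr
        · rw [intervalIntegral.integral_const_mul, hI, one_div_mul_eq_div, div_le_one (by positivity)]
          have := hsqle b ⟨hab, le_rfl⟩
          have := Real.sqrt_nonneg a
          linarith
    · intro a b ha hla hab hbm
      refine airy_trivial hs _ a b 4 ha hab ?_
      have h1 : √b ≤ 2 * q := by
        refine Real.sqrt_le_iff.2 ⟨by positivity, ?_⟩
        nlinarith
      have h2 : b - a ≤ 2 * δ := by linarith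
      calc √b * (b - a) ≤ (2 * q) * (2 * δ) := by gcongr
        _ = 4 * (δ * q) := by ring
        _ = 4 := by rw [hδq, mul_one]
  · intro a b ha hma hab _
    have hpl : ∀ ξ ∈ Set.Icc a b, 3 * (δ * (ξ + r)) ≤ 3 * ξ ^ 2 + -3 * r ^ 2 := fun ξ h => by
      have h1 : 0 < ξ := ha.trans_le h.1
      rw [hfac]
      gcongr
      linarith [h.1]
    have hpos : ∀ ξ ∈ Set.Icc a b, 0 < ξ := fun ξ h => ha.trans_le h.1
    have hppos : ∀ ξ ∈ Set.Icc a b, 0 < 3 * ξ ^ 2 + -3 * r ^ 2 := fun ξ h => by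
      have := hpos ξ h
      exact lt_of_lt_of_le (by positivity) (hpl ξ h)
    have hp : ∀ ξ ∈ Set.Icc a b, 3 * ξ ^ 2 + -3 * r ^ 2 ≠ 0 := fun ξ h => (hppos ξ h).ne'
    rw [← mul_one (5 + |s.im|)]
    refine airy_ibp hs _ a b 1 ha hab hp (fun ξ h => ?_) ?_
    · rw [abs_of_pos (hppos ξ h), div_le_one (hppos ξ h)]
      refine le_trans ?_ (hpl ξ h)
      have hx := hpos ξ h
      have e : ξ = √ξ * √ξ := (Real.mul_self_sqrt hx.le).symm
      have h3 : 2 * (√ξ * q) ≤ ξ + r := by nlinarith [sq_nonneg (√ξ - q)]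
      have h4 : 2 * √ξ ≤ δ * (ξ + r) := by
        calc 2 * √ξ = δ * (2 * (√ξ * q)) := by
              rw [show δ * (2 * (√ξ * q)) = 2 * √ξ * (δ * q) by ring, hδq, mul_one]
          _ ≤ _ := by gcongr
      linarith [Real.sqrt_nonneg ξ]
    · obtain ⟨hi, hI⟩ := integral_inv_mul_sqrt a b ha hab
      refine (intervalIntegral.integral_mono_on hab (airy_inv_integrable _ a b ha hab hp)
          (hi.const_mul (1 / (3 * δ))) fun ξ h => ?_).trans ?_
      · have hx := hpos ξ h
        have h1 : 0 < √ξ := Real.sqrt_pos.2 hx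
        have h2 := hpl ξ h
        rw [one_div_mul_one_div, abs_of_pos (hppos ξ h)]
        refine one_div_le_one_div_of_le (by positivity) ?_
        calc 3 * δ * (ξ * √ξ) = √ξ * (3 * (δ * ξ)) := by ring
          _ ≤ √ξ * (3 * (δ * (ξ + r))) := by gcongr; linarith
          _ ≤ _ := by gcongr
      · rw [intervalIntegral.integral_const_mul]
        have h5 : 2 / √a ≤ 2 * δ := by
          rw [hδ, mul_one_div]
          gcongr
          exact Real.sqrt_le_sqrt (by linarith)
        calc 1 / (3 * δ) * ∫ ξ in a..b, 1 / (ξ * √ξ) ≤ 1 / (3 * δ) * (2 * δ) := by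
              gcongr; exact hI.trans h5
          _ ≤ 1 := by
              rw [one_div_mul_eq_div, div_le_one (by positivity)]; linarith

theorem airy_unit {s : ℂ} (hs : s.re = 1 / 2) (x a b : ℝ) (ha : 0 < a) (hab : a ≤ b) :
    ‖∫ ξ in a..b, airyInt s 1 x ξ‖ ≤ 14 * (1 + |s.im|) := by
  rcases le_total (-3) x with hx | hx
  · exact airy_caseA hs x hx a b ha hab
  · have : x = -3 * (√(-x / 3)) ^ 2 := by rw [Real.sq_sqrt (by linarith)]; ring
    rw [this]
    exact airy_caseB hs _ (Real.one_le_sqrt.2 (by linarith)) a b ha hab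

theorem airy_pos {s : ℂ} (hs : s.re = 1 / 2) (t x a b : ℝ) (ht : 0 < t) (ha : 0 < a)
    (hab : a ≤ b) :
    ‖∫ ξ in a..b, airyInt s t x ξ‖ ≤ 14 * (1 + |s.im|) / √t := by
  set c := t ^ (1 / 3 : ℝ) with hc
  have hc0 : 0 < c := by positivity
  have hc3 : c ^ 3 = t := by
    rw [hc, ← Real.rpow_natCast, ← Real.rpow_mul ht.le]; norm_num
  have h1 := intervalIntegral.integral_comp_mul_left (a := a) (b := b)
    (fun ξ => airyInt s 1 (x / c) ξ) hc0.ne'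
  have h2 : ∀ ξ ∈ Set.uIcc a b, airyInt s 1 (x / c) (c * ξ) =
      Complex.exp (s * (Real.log c : ℂ)) * airyInt s t x ξ := fun ξ h => by
    rw [Set.uIcc_of_le hab] at h
    have h0 : 0 < ξ := ha.trans_le h.1
    unfold airyInt
    rw [Real.log_mul hc0.ne' h0.ne', ← hc3]
    rw [← mul_assoc (Complex.exp _) (Complex.exp _), ← Complex.exp_add (s * (Real.log c : ℂ)) (s * (Real.log ξ : ℂ))]
    congr 2
    · push_cast; ring
    · congr 2; field_simp
  rw [intervalIntegral.integral_congr h2, intervalIntegral.integral_const_mul] at h1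
  have h3 := congrArg norm h1
  rw [norm_mul, norm_smul, Complex.norm_exp, Complex.re_mul_ofReal, hs, norm_inv,
    Real.norm_of_nonneg hc0.le] at h3
  have h4 : Real.exp (1 / 2 * Real.log c) = √c := by
    rw [Real.sqrt_eq_rpow, Real.rpow_def_of_pos hc0]; ring_nf
  rw [h4] at h3
  have h5 := airy_unit hs (x / c) (c * a) (c * b) (by positivity) (by gcongr)
  have h6 : √t = c * √c := by
    rw [← hc3, show c ^ 3 = c ^ 2 * c by ring, Real.sqrt_mul (by positivity), Real.sqrt_sq hc0.le]
  rw [le_div_iff₀ (by positivity), h6]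
  have h7 : c * (√c * ‖∫ ξ in a..b, airyInt s t x ξ‖) =
      ‖∫ ξ in c * a..c * b, airyInt s 1 (x / c) ξ‖ := by rw [h3]; field_simp
  calc _ = c * (√c * ‖∫ ξ in a..b, airyInt s t x ξ‖) := by ring
    _ ≤ _ := by rw [h7]; exact h5

/-- Dispersive decay `|t|^{-1/2}` of the Airy-type integral with half a derivative, uniformly in
`x` and in the truncation, with linear growth in the imaginary part of the exponent. The scaling
`ξ ↦ |t|^{-1/3} ξ` and conjugation reduce it to `t = 1`. -/
theorem airy_bound {s : ℂ} (hs : s.re = 1 / 2) (t x a b : ℝ) (ht : t ≠ 0) (ha : 0 < a)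
    (hab : a ≤ b) :
    ‖∫ ξ in a..b, airyInt s t x ξ‖ ≤ 14 * (1 + |s.im|) / √|t| := by
  rcases lt_or_gt_of_ne ht with h | h
  · have h1 := airy_pos (s := (starRingEnd ℂ) s) (by simpa using hs) (-t) (-x) a b (by linarith)
      ha hab
    have h2 : ∫ ξ in a..b, airyInt ((starRingEnd ℂ) s) (-t) (-x) ξ =
        (starRingEnd ℂ) (∫ ξ in a..b, airyInt s t x ξ) := by
      rw [intervalIntegral.integral_of_le hab, intervalIntegral.integral_of_le hab, ← integral_conj]
      congr 1; ext ξ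
      unfold airyInt
      rw [map_mul, ← Complex.exp_conj, ← Complex.exp_conj, map_mul, map_mul, Complex.conj_I,
        Complex.conj_ofReal, Complex.conj_ofReal]
      congr 2; push_cast; ring
    rw [h2, RCLike.norm_conj] at h1
    rw [abs_of_neg h]
    simpa using h1
  · rw [abs_of_pos h]
    exact airy_pos hs t x a b h ha hab

/-! ### A Gaussian combination and its scale integral -/

/-- An even combination of Gaussians, of rapid decay, with `ψ(0) = 1 - 3 + 2 = 0`; hence it vanishes
to second order at `0`. -/
def psi (t : ℝ) : ℝ := Real.exp (-t ^ 2) - 3 * Real.exp (-4 * t ^ 2) + 2 * Real.exp (-16 * t ^ 2)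

/-- The Fourier transform of `psi`, normalized by `ψ(s) = ∫ e^{isω} psiHat ω dω`. It also vanishes
to second order at `0`, because `1 - 3/2 + 1/2 = 0`. -/
def psiHat (ω : ℝ) : ℝ :=
  (2 * √Real.pi)⁻¹ * (Real.exp (-(1 / 4) * ω ^ 2) - 3 / 2 * Real.exp (-(1 / 16) * ω ^ 2) +
    1 / 2 * Real.exp (-(1 / 64) * ω ^ 2))

theorem continuous_psi : Continuous psi := by unfold psi; fun_prop

theorem continuous_psiHat : Continuous psiHat := by unfold psiHat; fun_prop

theorem psi_even (t : ℝ) : psi (-t) = psi t := by simp [psi]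

theorem integrable_psiHat : Integrable psiHat := by
  have h1 := integrable_exp_neg_mul_sq (b := 1 / 4) (by norm_num)
  have h2 := integrable_exp_neg_mul_sq (b := 1 / 16) (by norm_num)
  have h3 := integrable_exp_neg_mul_sq (b := 1 / 64) (by norm_num)
  exact (((h1.sub (h2.const_mul (3 / 2))).add (h3.const_mul (1 / 2)))).const_mul _

theorem psi_ft (s : ℝ) :
    ∫ ω : ℝ, Complex.exp (Complex.I * ((s * ω : ℝ) : ℂ)) * ((psiHat ω : ℝ) : ℂ) =
      ((psi s : ℝ) : ℂ) := by
  have hi : ∀ b : ℝ, 0 < b → Integrable (fun ω : ℝ => Complex.exp (Complex.I * ((s * ω : ℝ) : ℂ)) *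
      ((Real.exp (-b * ω ^ 2) : ℝ) : ℂ)) := fun b hb => by
    refine (integrable_exp_neg_mul_sq hb).ofReal.bdd_mul (c := 1)
      (Continuous.aestronglyMeasurable (by fun_prop)) (Filter.Eventually.of_forall fun ω => ?_)
    rw [mul_comm, Complex.norm_exp_ofReal_mul_I]
  have e : ∀ ω : ℝ, Complex.exp (Complex.I * ((s * ω : ℝ) : ℂ)) * ((psiHat ω : ℝ) : ℂ) =
      ((2 * √Real.pi)⁻¹ : ℝ) * ((Complex.exp (Complex.I * ((s * ω : ℝ) : ℂ)) *
        ((Real.exp (-(1 / 4) * ω ^ 2) : ℝ) : ℂ) -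
        (3 / 2) * (Complex.exp (Complex.I * ((s * ω : ℝ) : ℂ)) *
          ((Real.exp (-(1 / 16) * ω ^ 2) : ℝ) : ℂ))) +
        (1 / 2) * (Complex.exp (Complex.I * ((s * ω : ℝ) : ℂ)) *
          ((Real.exp (-(1 / 64) * ω ^ 2) : ℝ) : ℂ))) := fun ω => by
    unfold psiHat; push_cast; ring
  simp_rw [e]
  have h3 : Integrable (fun ω : ℝ => Complex.exp (Complex.I * ((s * ω : ℝ) : ℂ)) *
        ((Real.exp (-(1 / 4) * ω ^ 2) : ℝ) : ℂ) -
        (3 / 2) * (Complex.exp (Complex.I * ((s * ω : ℝ) : ℂ)) *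
          ((Real.exp (-(1 / 16) * ω ^ 2) : ℝ) : ℂ))) :=
    (hi _ (by norm_num)).sub ((hi _ (by norm_num)).const_mul _)
  rw [integral_const_mul, integral_add h3
    ((hi _ (by norm_num)).const_mul _), integral_sub (hi _ (by norm_num))
    ((hi _ (by norm_num)).const_mul _), integral_const_mul, integral_const_mul,
    gauss_ft _ (by norm_num), gauss_ft _ (by norm_num), gauss_ft _ (by norm_num)]
  have p1 : (Real.pi / (1 / 4)) ^ (1 / 2 : ℝ) = 2 * √Real.pi := by
    rw [← Real.sqrt_eq_rpow, show Real.pi / (1 / 4) = 2 ^ 2 * Real.pi by ring,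
      Real.sqrt_mul (by norm_num), Real.sqrt_sq (by norm_num)]
  have p2 : (Real.pi / (1 / 16)) ^ (1 / 2 : ℝ) = 4 * √Real.pi := by
    rw [← Real.sqrt_eq_rpow, show Real.pi / (1 / 16) = 4 ^ 2 * Real.pi by ring,
      Real.sqrt_mul (by norm_num), Real.sqrt_sq (by norm_num)]
  have p3 : (Real.pi / (1 / 64)) ^ (1 / 2 : ℝ) = 8 * √Real.pi := by
    rw [← Real.sqrt_eq_rpow, show Real.pi / (1 / 64) = 8 ^ 2 * Real.pi by ring,
      Real.sqrt_mul (by norm_num), Real.sqrt_sq (by norm_num)]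
  rw [p1, p2, p3]
  have hp : (√Real.pi) ≠ 0 := (Real.sqrt_pos.2 Real.pi_pos).ne'
  have e1 : -s ^ 2 / (4 * (1 / 4)) = -s ^ 2 := by ring
  have e2 : -s ^ 2 / (4 * (1 / 16)) = -4 * s ^ 2 := by ring
  have e3 : -s ^ 2 / (4 * (1 / 64)) = -16 * s ^ 2 := by ring
  rw [e1, e2, e3]
  unfold psi
  norm_cast
  push_cast
  have hpc : ((√Real.pi : ℝ) : ℂ) ≠ 0 := by exact_mod_cast hp
  field_simp
  ring

theorem exp_facts (a x : ℝ) (ha : 0 < a) :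
    0 ≤ Real.exp (-a * x ^ 2) ∧ Real.exp (-a * x ^ 2) ≤ 1 ∧ 1 - a * x ^ 2 ≤ Real.exp (-a * x ^ 2) ∧
      x ^ 2 * Real.exp (-a * x ^ 2) ≤ 1 / a := by
  have h : 0 ≤ a * x ^ 2 := by positivity
  refine ⟨(Real.exp_pos _).le, Real.exp_le_one_iff.2 (by linarith), ?_, ?_⟩
  · have := Real.add_one_le_exp (-a * x ^ 2); linarith
  · have h1 := Real.add_one_le_exp (a * x ^ 2)
    have h2 : Real.exp (-a * x ^ 2) * Real.exp (a * x ^ 2) = 1 := by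
      rw [← Real.exp_add]; simp
    have h3 := Real.exp_pos (-a * x ^ 2)
    rw [le_div_iff₀ ha]
    nlinarith

theorem psi_bounds (t : ℝ) : |psi t| ≤ 60 * t ^ 2 ∧ |psi t| ≤ 60 ∧ t ^ 2 * |psi t| ≤ 60 := by
  obtain ⟨a1, a2, a3, a4⟩ := exp_facts 1 t (by norm_num)
  obtain ⟨b1, b2, b3, b4⟩ := exp_facts 4 t (by norm_num)
  obtain ⟨c1, c2, c3, c4⟩ := exp_facts 16 t (by norm_num)
  have ht := sq_nonneg t
  have hp : psi t = Real.exp (-1 * t ^ 2) - 3 * Real.exp (-4 * t ^ 2) +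
    2 * Real.exp (-16 * t ^ 2) := by simp [psi]
  have h0 := mul_nonneg ht a1
  have h1 := mul_nonneg ht b1
  have h2 := mul_nonneg ht c1
  rw [← abs_of_nonneg ht, ← abs_mul, abs_of_nonneg ht, hp]
  refine ⟨abs_le.2 ⟨by linarith, by linarith⟩, abs_le.2 ⟨by linarith, by linarith⟩,
    abs_le.2 ⟨?_, ?_⟩⟩ <;> norm_num at * <;> linarith

theorem psiHat_bounds (t : ℝ) :
    |psiHat t| ≤ 60 * t ^ 2 ∧ |psiHat t| ≤ 60 ∧ t ^ 2 * |psiHat t| ≤ 60 := by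
  obtain ⟨a1, a2, a3, a4⟩ := exp_facts (1 / 4) t (by norm_num)
  obtain ⟨b1, b2, b3, b4⟩ := exp_facts (1 / 16) t (by norm_num)
  obtain ⟨c1, c2, c3, c4⟩ := exp_facts (1 / 64) t (by norm_num)
  have ht := sq_nonneg t
  have h0 := mul_nonneg ht a1
  have h1 := mul_nonneg ht b1
  have h2 := mul_nonneg ht c1
  have hc : (2 * √Real.pi)⁻¹ ≤ 1 := by
    apply inv_le_one_of_one_le₀
    have : 1 ≤ √Real.pi := Real.one_le_sqrt.2 (by linarith [Real.pi_gt_three])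
    linarith
  have hc0 : 0 ≤ (2 * √Real.pi)⁻¹ := by positivity
  set q := Real.exp (-(1 / 4) * t ^ 2) - 3 / 2 * Real.exp (-(1 / 16) * t ^ 2) +
    1 / 2 * Real.exp (-(1 / 64) * t ^ 2) with hq
  have hpq : |psiHat t| ≤ |q| := by
    have : psiHat t = (2 * √Real.pi)⁻¹ * q := rfl
    rw [this, abs_mul, abs_of_nonneg hc0]
    exact mul_le_of_le_one_left (abs_nonneg _) hc
  have hq3 : |q| ≤ 60 * t ^ 2 ∧ |q| ≤ 60 ∧ t ^ 2 * |q| ≤ 60 := by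
    rw [← abs_of_nonneg ht, ← abs_mul, abs_of_nonneg ht, hq]
    refine ⟨abs_le.2 ⟨by linarith, by linarith⟩, abs_le.2 ⟨by linarith, by linarith⟩,
      abs_le.2 ⟨?_, ?_⟩⟩ <;> norm_num at * <;> linarith
  exact ⟨hpq.trans hq3.1, hpq.trans hq3.2.1, (mul_le_mul_of_nonneg_left hpq ht).trans hq3.2.2⟩

/-- The three elementary bounds satisfied by `psi` and `psiHat` make division by `|x|` or `x²`
integrable. -/
theorem decay_of_bounds (x q : ℝ) (h : |q| ≤ 60 * x ^ 2 ∧ |q| ≤ 60 ∧ x ^ 2 * |q| ≤ 60) :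
    |q| / |x| ≤ 120 * (1 + x ^ 2)⁻¹ ∧ |q| / x ^ 2 ≤ 120 * (1 + x ^ 2)⁻¹ := by
  obtain ⟨h1, h2, h3⟩ := h
  rcases eq_or_ne x 0 with rfl | hx
  · simp
  have hx0 : 0 < |x| := abs_pos.2 hx
  have hq := abs_nonneg q
  have hx2 : 0 < x ^ 2 := by positivity
  rw [← div_eq_mul_inv]
  constructor
  · rw [div_le_div_iff₀ hx0 (by positivity)]
    rw [← sq_abs] at h1 h3 ⊢
    set y := |x|
    rcases le_total y 1 with hy | hy
    · nlinarith [mul_nonneg hq hx0.le, mul_le_mul_of_nonneg_left hy hx0.le]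
    · nlinarith [mul_nonneg hq hx0.le]
  · rw [div_le_div_iff₀ hx2 (by positivity)]
    nlinarith

/-- Integrability of `psiHat ω / ω`, the only property of `psiHat` needed on `Re z = 0`. -/
theorem lintegral_psiHat_div :
    ∫⁻ ω : ℝ, ENNReal.ofReal (|psiHat ω| / |ω|) ≤ ENNReal.ofReal (120 * Real.pi) := by
  calc ∫⁻ ω : ℝ, ENNReal.ofReal (|psiHat ω| / |ω|)
      ≤ ∫⁻ ω : ℝ, ENNReal.ofReal (120 * (1 + ω ^ 2)⁻¹) :=
        lintegral_mono fun ω => ENNReal.ofReal_le_ofReal (decay_of_bounds ω _ (psiHat_bounds ω)).1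
    _ = ENNReal.ofReal (∫ ω : ℝ, 120 * (1 + ω ^ 2)⁻¹) :=
        (ofReal_integral_eq_lintegral_ofReal (integrable_inv_one_add_sq.const_mul _)
          (Filter.Eventually.of_forall fun ω => by positivity)).symm
    _ = _ := by rw [integral_const_mul, integral_univ_inv_one_add_sq]

theorem integrable_psi_div_sq : Integrable (fun x : ℝ => |psi x| / x ^ 2) := by
  refine (integrable_inv_one_add_sq.const_mul 120).mono'
    (Measurable.aestronglyMeasurable (by have := continuous_psi.measurable; fun_prop))
    (Filter.Eventually.of_forall fun x => ?_)
  rw [Real.norm_of_nonneg (by positivity)]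
  exact (decay_of_bounds x _ (psi_bounds x)).2

theorem integral_psi_div_sq_le : ∫ x : ℝ, |psi x| / x ^ 2 ≤ 120 * Real.pi := by
  calc _ ≤ ∫ x : ℝ, 120 * (1 + x ^ 2)⁻¹ := integral_mono integrable_psi_div_sq
        (integrable_inv_one_add_sq.const_mul 120) fun x => (decay_of_bounds x _ (psi_bounds x)).2
    _ = _ := by rw [integral_const_mul, integral_univ_inv_one_add_sq]

theorem integrable_psi_div_abs : Integrable (fun x : ℝ => |psi x| / |x|) := by
  refine (integrable_inv_one_add_sq.const_mul 120).mono'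
    (Measurable.aestronglyMeasurable (by have := continuous_psi.measurable; fun_prop))
    (Filter.Eventually.of_forall fun x => ?_)
  rw [Real.norm_of_nonneg (by positivity)]
  exact (decay_of_bounds x _ (psi_bounds x)).1

theorem integral_psi_div_abs_le : ∫ x : ℝ, |psi x| / |x| ≤ 120 * Real.pi := by
  calc _ ≤ ∫ x : ℝ, 120 * (1 + x ^ 2)⁻¹ := integral_mono integrable_psi_div_abs
        (integrable_inv_one_add_sq.const_mul 120) fun x => (decay_of_bounds x _ (psi_bounds x)).1
    _ = _ := by rw [integral_const_mul, integral_univ_inv_one_add_sq]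

/-- Scaling of `∫ |ψ(λτ)| λ⁻² dλ`. -/
theorem psi_scale_sq (τ : ℝ) (hτ : τ ≠ 0) :
    Integrable (fun l : ℝ => |psi (l * τ)| / l ^ 2) ∧
    ∫ l : ℝ, |psi (l * τ)| / l ^ 2 ≤ 120 * Real.pi * |τ| := by
  have e : (fun l : ℝ => |psi (l * τ)| / l ^ 2) =
      fun l => τ ^ 2 * (fun x : ℝ => |psi x| / x ^ 2) (l * τ) := by
    funext l; simp only; field_simp
  rw [e]
  refine ⟨(integrable_psi_div_sq.comp_mul_right' hτ).const_mul _, ?_⟩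
  rw [integral_const_mul, Measure.integral_comp_mul_right (fun x : ℝ => |psi x| / x ^ 2), smul_eq_mul, abs_inv]
  have h := integral_psi_div_sq_le
  have hτ0 : 0 < |τ| := abs_pos.2 hτ
  calc τ ^ 2 * (|τ|⁻¹ * ∫ x : ℝ, |psi x| / x ^ 2) = |τ| * ∫ x : ℝ, |psi x| / x ^ 2 := by
        rw [← sq_abs]; field_simp
    _ ≤ |τ| * (120 * Real.pi) := by gcongr
    _ = _ := by ring

theorem psi_scale_abs (τ : ℝ) (hτ : τ ≠ 0) :
    Integrable (fun l : ℝ => |psi (l * τ)| / |l|) ∧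
    ∫ l : ℝ, |psi (l * τ)| / |l| ≤ 120 * Real.pi := by
  have e : (fun l : ℝ => |psi (l * τ)| / |l|) =
      fun l => |τ| * (fun x : ℝ => |psi x| / |x|) (l * τ) := by
    funext l; simp only [abs_mul]; field_simp
  rw [e]
  refine ⟨(integrable_psi_div_abs.comp_mul_right' hτ).const_mul _, ?_⟩
  rw [integral_const_mul, Measure.integral_comp_mul_right (fun x : ℝ => |psi x| / |x|), smul_eq_mul, abs_inv]
  have h := integral_psi_div_abs_le
  have hτ0 : 0 < |τ| := abs_pos.2 hτ
  calc |τ| * (|τ|⁻¹ * ∫ x : ℝ, |psi x| / |x|) = ∫ x : ℝ, |psi x| / |x| := by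
        field_simp
    _ ≤ _ := h

/-- The scale integral `∫₀^∞ ψ(x) dx/x`. -/
def cpsi : ℝ := ∫ x in Set.Ioi (0 : ℝ), psi x / x

theorem chi_facts : IntegrableOn (fun x : ℝ => (Real.exp (-x ^ 2) - Real.exp (-4 * x ^ 2)) / x)
    (Set.Ioi 0) := by
  refine ((integrable_inv_one_add_sq.const_mul 120).integrableOn (s := Set.Ioi 0)).mono'
    (Measurable.aestronglyMeasurable (by fun_prop))
    (Filter.Eventually.of_forall fun x => ?_)
  obtain ⟨a1, a2, a3, a4⟩ := exp_facts 1 x (by norm_num)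
  obtain ⟨b1, b2, b3, b4⟩ := exp_facts 4 x (by norm_num)
  have hx := sq_nonneg x
  have h0 := mul_nonneg hx a1
  have h1 := mul_nonneg hx b1
  rw [norm_div, Real.norm_eq_abs, Real.norm_eq_abs]
  refine (decay_of_bounds x _ ?_).1
  rw [← abs_of_nonneg hx, ← abs_mul, abs_of_nonneg hx, show -x ^ 2 = -1 * x ^ 2 by ring]
  refine ⟨abs_le.2 ⟨by linarith, by linarith⟩, abs_le.2 ⟨by linarith, by linarith⟩,
      abs_le.2 ⟨?_, ?_⟩⟩ <;> norm_num at * <;> linarith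

/-- With `χ(x) = (e^{-x²} - e^{-4x²})/x`, positive for `x > 0`, one has `ψ(x)/x = χ(x) - 4 χ(2x)`, so
`cpsi = ∫ χ - 2 ∫ χ = -∫ χ` over `(0, ∞)`. -/
theorem cpsi_neg : cpsi < 0 := by
  set χ : ℝ → ℝ := fun x => (Real.exp (-x ^ 2) - Real.exp (-4 * x ^ 2)) / x with hχ
  have hi := chi_facts
  have e : ∀ x : ℝ, psi x / x = χ x - 4 * χ (2 * x) := fun x => by
    rcases eq_or_ne x 0 with rfl | hx
    · simp [hχ]
    simp only [hχ, psi]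
    rw [show -(2 * x) ^ 2 = -4 * x ^ 2 by ring, show -4 * (2 * x) ^ 2 = -16 * x ^ 2 by ring]
    field_simp
    ring
  have hi2 : IntegrableOn (fun x => χ (2 * x)) (Set.Ioi 0) := by
    have := (integrableOn_Ioi_comp_mul_left_iff χ 0 (a := 2) (by norm_num)).2 (by rw [mul_zero]; exact hi)
    exact this
  have h2 : ∫ x in Set.Ioi (0 : ℝ), χ (2 * x) = 2⁻¹ * ∫ x in Set.Ioi (0 : ℝ), χ x := by
    rw [integral_comp_mul_left_Ioi χ 0 (by norm_num)]; simp
  have hpos : 0 < ∫ x in Set.Ioi (0 : ℝ), χ x := by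
    have hp : ∀ x ∈ Set.Ioi (0 : ℝ), 0 < χ x := fun x hx => by
      have hx : 0 < x := hx
      have h1 : 0 < x ^ 2 := by positivity
      exact div_pos (sub_pos.2 (Real.exp_lt_exp.2 (by linarith))) hx
    rw [setIntegral_pos_iff_support_of_nonneg_ae
      ((ae_restrict_mem measurableSet_Ioi).mono fun x hx => (hp x hx).le) hi]
    have : Set.Ioi (0 : ℝ) ⊆ Function.support χ ∩ Set.Ioi 0 := fun x hx => ⟨(hp x hx).ne', hx⟩
    exact lt_of_lt_of_le (by simp) (measure_mono this)
  unfold cpsi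
  simp_rw [e]
  rw [integral_sub hi (hi2.const_mul 4), integral_const_mul, h2]
  linarith

/-- The truncated logarithmic averages of `ψ(λ τ)` converge to a nonzero constant. -/
theorem kappa_tendsto (τ : ℝ) (hτ : τ ≠ 0) :
    Filter.Tendsto (fun n : ℕ => ∫ l in Set.Icc ((n : ℝ) + 1)⁻¹ (n + 1), psi (l * τ) / l)
      Filter.atTop (nhds cpsi) := by
  have hU : ⋃ n : ℕ, Set.Icc ((n : ℝ) + 1)⁻¹ (n + 1) = Set.Ioi (0 : ℝ) := by
    ext x
    simp only [Set.mem_iUnion, Set.mem_Icc, Set.mem_Ioi]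
    constructor
    · rintro ⟨n, h, -⟩
      exact lt_of_lt_of_le (by positivity) h
    · intro hx
      obtain ⟨n, hn⟩ := exists_nat_ge (max x x⁻¹)
      refine ⟨n, ?_, ?_⟩
      · rw [inv_le_comm₀ (by positivity) hx]
        linarith [le_max_right x x⁻¹]
      · linarith [le_max_left x x⁻¹]
  have hInt : Integrable (fun l : ℝ => psi (l * τ) / l) :=
    (psi_scale_abs τ hτ).1.mono' (Measurable.aestronglyMeasurable (by
      have := continuous_psi.measurable; fun_prop))
      (Filter.Eventually.of_forall fun l => by rw [norm_div]; rfl)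
  have h := tendsto_setIntegral_of_monotone (μ := volume) (f := fun l : ℝ => psi (l * τ) / l)
    (s := fun n : ℕ => Set.Icc ((n : ℝ) + 1)⁻¹ (n + 1)) (fun n => measurableSet_Icc)
    (fun i j hij => Set.Icc_subset_Icc (by
      have : (i : ℝ) ≤ j := by exact_mod_cast hij
      gcongr) (by
      have : (i : ℝ) ≤ j := by exact_mod_cast hij
      gcongr)) hInt.integrableOn
  rw [hU] at h
  convert h using 2
  have hτ0 : 0 < |τ| := abs_pos.2 hτ
  have e : ∀ l : ℝ, psi (l * τ) / l = |τ| * (psi (|τ| * l) / (|τ| * l)) := fun l => by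
    have : psi (l * τ) = psi (|τ| * l) := by
      rcases abs_choice τ with h | h <;> rw [h]
      · rw [mul_comm]
      · rw [← psi_even]; ring_nf
    rw [this]; field_simp
  simp_rw [e]
  rw [integral_const_mul, integral_comp_mul_left_Ioi (fun x => psi x / x) 0 hτ0, smul_eq_mul,
    mul_zero, ← mul_assoc, mul_inv_cancel₀ hτ0.ne', one_mul]
  rfl

theorem kappa_bound (τ : ℝ) (s : Set ℝ) :
    ∫ l in s, |psi (l * τ)| / |l| ≤ 120 * Real.pi := by
  rcases eq_or_ne τ 0 with rfl | hτ
  · simp [psi]; norm_num; positivity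
  · exact (setIntegral_le_integral (psi_scale_abs τ hτ).1
      (Filter.Eventually.of_forall fun l => by positivity)).trans (psi_scale_abs τ hτ).2

/-! ### Analyticity, plane waves, and the estimate on the line `Re z = 0` -/

/-- An integral of `c · e^{zL}` with `c` integrable and `L` bounded is entire in `z`. -/
theorem exp_family_differentiable {X : Type*} [MeasurableSpace X] (μ : Measure X) (c : X → ℂ)
    (L : X → ℝ) (M : ℝ) (hc : Integrable c μ) (hL : Measurable L) (hM : ∀ᵐ x ∂μ, |L x| ≤ M) :
    Differentiable ℂ (fun z : ℂ => ∫ x, c x * Complex.exp (z * (L x : ℂ)) ∂μ) := by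
  intro z₀
  have hnorm : ∀ z : ℂ, ∀ l : ℝ, ‖Complex.exp (z * (l : ℂ))‖ = Real.exp (z.re * l) := fun z l => by
    rw [Complex.norm_exp, Complex.re_mul_ofReal]
  have hmeas : ∀ z : ℂ, AEStronglyMeasurable (fun x => c x * Complex.exp (z * (L x : ℂ))) μ :=
    fun z => hc.aestronglyMeasurable.mul (Measurable.aestronglyMeasurable (by fun_prop))
  have hbd : ∀ z : ℂ, ∀ l : ℝ, |l| ≤ M → ‖Complex.exp (z * (l : ℂ))‖ ≤ Real.exp (|z.re| * M) :=
    fun z l hl => by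
      rw [hnorm]
      refine Real.exp_le_exp.2 ((le_abs_self _).trans ?_)
      rw [abs_mul]; gcongr
  refine (hasDerivAt_integral_of_dominated_loc_of_deriv_le (𝕜 := ℂ)
    (F := fun z x => c x * Complex.exp (z * (L x : ℂ)))
    (F' := fun z x => c x * (Complex.exp (z * (L x : ℂ)) * (L x : ℂ))) (x₀ := z₀)
    (bound := fun x => ‖c x‖ * (Real.exp ((|z₀.re| + 1) * M) * M)) (s := Metric.ball z₀ 1)
    (Metric.ball_mem_nhds z₀ one_pos) (Filter.Eventually.of_forall hmeas) ?_ ?_ ?_ ?_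
    ?_).2.differentiableAt
  · refine (hc.norm.mul_const (Real.exp (|z₀.re| * M))).mono' (hmeas z₀) ?_
    filter_upwards [hM] with x hx
    rw [norm_mul]
    exact mul_le_mul_of_nonneg_left (hbd _ _ hx) (norm_nonneg _)
  · exact hc.aestronglyMeasurable.mul (Measurable.aestronglyMeasurable (by fun_prop))
  · filter_upwards [hM] with x hx z hz
    rw [norm_mul, norm_mul]
    have hM0 : 0 ≤ M := (abs_nonneg _).trans hx
    have h1 : |z.re| ≤ |z₀.re| + 1 := by
      have h2 : |(z - z₀).re| ≤ 1 := (Complex.abs_re_le_norm _).trans (by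
        rw [← dist_eq_norm]; exact (Metric.mem_ball.1 hz).le)
      rw [Complex.sub_re] at h2
      have := abs_sub_abs_le_abs_sub z.re z₀.re
      linarith
    gcongr
    · refine (hbd _ _ hx).trans (Real.exp_le_exp.2 ?_)
      gcongr
    · rw [Complex.norm_real]; exact hx
  · exact hc.norm.mul_const _
  · refine Filter.Eventually.of_forall fun x z _ => ?_
    have h1 : HasDerivAt (fun z : ℂ => z * (L x : ℂ)) (L x : ℂ) z := by
      simpa using (hasDerivAt_id z).mul_const (L x : ℂ)
    exact (h1.cexp).const_mul (c x)

theorem exp_family_bounded {X : Type*} [MeasurableSpace X] (μ : Measure X) (c : X → ℂ)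
    (L : X → ℝ) (M : ℝ) (hc : Integrable c μ) (hM : ∀ᵐ x ∂μ, |L x| ≤ M) (z : ℂ)
    (hz0 : 0 ≤ z.re) (hz1 : z.re ≤ 1) :
    ‖∫ x, c x * Complex.exp (z * (L x : ℂ)) ∂μ‖ ≤ ∫ x, ‖c x‖ * Real.exp M ∂μ := by
  refine norm_integral_le_of_norm_le (hc.norm.mul_const _) ?_
  filter_upwards [hM] with x hx
  rw [norm_mul, Complex.norm_exp, Complex.re_mul_ofReal]
  refine mul_le_mul_of_nonneg_left (Real.exp_le_exp.2 ?_) (norm_nonneg _)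
  have := abs_le.1 hx
  nlinarith

/-- The plane wave `e^{i(t(ξ³+η³)+xξ+yη)}`, with `v = (t, x, y)` and `ζ = (ξ, η)`. -/
def wave (v : ℝ × ℝ × ℝ) (ζ : ℝ × ℝ) : ℂ :=
  Complex.exp (Complex.I * ((v.1 * (ζ.1 ^ 3 + ζ.2 ^ 3) + v.2.1 * ζ.1 + v.2.2 * ζ.2 : ℝ) : ℂ))

theorem norm_wave (v : ℝ × ℝ × ℝ) (ζ : ℝ × ℝ) : ‖wave v ζ‖ = 1 := by
  rw [wave, mul_comm, Complex.norm_exp_ofReal_mul_I]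

theorem norm_expI (r : ℝ) : ‖Complex.exp (Complex.I * (r : ℂ))‖ = 1 := by
  rw [mul_comm, Complex.norm_exp_ofReal_mul_I]

theorem conj_expI (r : ℝ) : (starRingEnd ℂ) (Complex.exp (Complex.I * (r : ℂ))) =
    Complex.exp (Complex.I * ((-r : ℝ) : ℂ)) := by
  rw [← Complex.exp_conj]; simp

theorem continuous_wave : Continuous (Function.uncurry wave) := by
  unfold wave Function.uncurry; fun_prop

/-- The one-dimensional Fourier kernel `e^{ixξ}`. -/
def expK (ξ x : ℝ) : ℂ := Complex.exp (Complex.I * ((x * ξ : ℝ) : ℂ))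

theorem expK_m : Measurable (Function.uncurry expK) := by
    unfold expK Function.uncurry; fun_prop

theorem besselK : BesselOn expK (ENNReal.ofReal (2 * Real.pi)) := bessel1

/-- The two-dimensional Fourier kernel. -/
def expK2 (w y : ℝ × ℝ) : ℂ := expK w.1 y.1 * expK w.2 y.2

theorem norm_expK (ξ x : ℝ) : ‖expK ξ x‖ = 1 := norm_expI _

theorem bessel2 : BesselOn expK2 (ENNReal.ofReal (2 * Real.pi) * ENNReal.ofReal (2 * Real.pi)) :=
  BesselOn.prod besselK besselK expK_m expK_m norm_expK norm_expK

theorem expK2_m : Measurable (Function.uncurry expK2) := by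
    unfold expK2 expK Function.uncurry; fun_prop

theorem norm_expK2 (ξ x : ℝ × ℝ) : ‖expK2 ξ x‖ = 1 := by
  unfold expK2; rw [norm_mul, norm_expK, norm_expK, one_mul]

theorem bessel3 : BesselOn (fun (w y : ℝ × ℝ × ℝ) => expK w.1 y.1 * expK2 w.2 y.2)
    (ENNReal.ofReal (2 * Real.pi) * (ENNReal.ofReal (2 * Real.pi) * ENNReal.ofReal (2 * Real.pi))) :=
  BesselOn.prod besselK bessel2 expK_m expK2_m norm_expK norm_expK2

/-- The space-time Fourier transform of `f` at the frequency `(τ + ξ³ + η³, ξ, η)`, with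
`q = (τ, ξ, η)`. -/
def modFT (f : ℝ × ℝ × ℝ → ℂ) (q : ℝ × ℝ × ℝ) : ℂ :=
  ∫ v : ℝ × ℝ × ℝ, Complex.exp (Complex.I * ((v.1 * q.1 : ℝ) : ℂ)) * wave v q.2 * f v

theorem measurable_modFT (f : ℝ × ℝ × ℝ → ℂ) (hf : Measurable f) : Measurable (modFT f) := by
  have : Measurable (Function.uncurry fun (q v : ℝ × ℝ × ℝ) =>
      Complex.exp (Complex.I * ((v.1 * q.1 : ℝ) : ℂ)) * wave v q.2 * f v) := by
    unfold wave Function.uncurry; fun_prop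
  exact (this.stronglyMeasurable.integral_prod_right).measurable

/-- Bessel's inequality for `modFT`: the shear `τ ↦ τ + ξ³ + η³` preserves Lebesgue measure. -/
theorem bessel_wave (f : ℝ × ℝ × ℝ → ℂ) (hf : Measurable f) (hi : Integrable f) :
    ∫⁻ q : ℝ × ℝ × ℝ, ‖modFT f q‖ₑ ^ 2 ≤
      ENNReal.ofReal ((2 * Real.pi) ^ 3) * ∫⁻ v, ‖f v‖ₑ ^ 2 := by
  have hm := measurable_modFT f hf
  set F : ℝ × ℝ × ℝ → ℂ := fun w => ∫ y : ℝ × ℝ × ℝ, Complex.exp (Complex.I * ((y.1 * w.1 : ℝ) : ℂ)) *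
    (Complex.exp (Complex.I * ((y.2.1 * w.2.1 : ℝ) : ℂ)) *
      Complex.exp (Complex.I * ((y.2.2 * w.2.2 : ℝ) : ℂ))) * f y with hF
  have hFm : Measurable F := by
    have : Measurable (Function.uncurry fun (w y : ℝ × ℝ × ℝ) =>
      Complex.exp (Complex.I * ((y.1 * w.1 : ℝ) : ℂ)) *
    (Complex.exp (Complex.I * ((y.2.1 * w.2.1 : ℝ) : ℂ)) *
      Complex.exp (Complex.I * ((y.2.2 * w.2.2 : ℝ) : ℂ))) * f y) := by
      unfold Function.uncurry; fun_prop
    exact (this.stronglyMeasurable.integral_prod_right).measurable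
  have hB : ∫⁻ w : ℝ × ℝ × ℝ, ‖F w‖ₑ ^ 2 ≤ _ := bessel3 f hf hi
  have e : ∀ τ ζ, modFT f (τ, ζ) = F (τ + (ζ.1 ^ 3 + ζ.2 ^ 3), ζ) := fun τ ζ => by
    simp only [modFT, hF, wave]
    refine integral_congr_ae (Filter.Eventually.of_forall fun v => ?_)
    simp only [← Complex.exp_add]
    congr 2
    push_cast; ring
  have hsw : ∫⁻ q : ℝ × ℝ × ℝ, ‖modFT f q‖ₑ ^ 2 = ∫⁻ w : ℝ × ℝ × ℝ, ‖F w‖ₑ ^ 2 := by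
    rw [Measure.volume_eq_prod, lintegral_prod_symm _ (by fun_prop),
      lintegral_prod_symm _ (by fun_prop)]
    refine lintegral_congr fun ζ => ?_
    simp_rw [e]
    exact lintegral_add_right_eq_self (fun τ => ‖F (τ, ζ)‖ₑ ^ 2) _
  rw [hsw]
  refine hB.trans (le_of_eq ?_)
  congr 1
  rw [← ENNReal.ofReal_mul (by positivity), ← ENNReal.ofReal_mul (by positivity)]
  congr 1; ring

theorem lintegral_comp_mul_right_le (H : ℝ → ℝ≥0∞) (hH : Measurable H) (ω : ℝ) (hω : ω ≠ 0) :
    ∫⁻ l, H (l * ω) = ENNReal.ofReal |ω|⁻¹ * ∫⁻ τ, H τ := by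
  have h := Real.map_volume_mul_right hω
  have h2 : ∫⁻ l, H (l * ω) = ∫⁻ τ, H τ ∂(Measure.map (· * ω) volume) :=
    (lintegral_map hH (by fun_prop)).symm
  rw [h2, h, lintegral_smul_measure, abs_inv, smul_eq_mul]

/-- The substitution `λ ↦ λω` produces the factor `|ω|⁻¹`, which `psiHat` absorbs. -/
theorem line0_aux (f : ℝ × ℝ × ℝ → ℂ) (hf : Measurable f) (hi : Integrable f) :
    ∫⁻ q : ℝ × ℝ × ℝ, ∫⁻ ω : ℝ, ‖psiHat ω‖ₑ * ‖modFT f (q.1 * ω, q.2)‖ₑ ^ 2 ≤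
      ENNReal.ofReal (120 * Real.pi * (2 * Real.pi) ^ 3) * ∫⁻ v, ‖f v‖ₑ ^ 2 := by
  have hm := measurable_modFT f hf
  have hps := continuous_psiHat.measurable
  rw [lintegral_lintegral_swap (by fun_prop)]
  have hB := bessel_wave f hf hi
  set B := ENNReal.ofReal ((2 * Real.pi) ^ 3) * ∫⁻ v, ‖f v‖ₑ ^ 2
  calc ∫⁻ ω : ℝ, ∫⁻ q : ℝ × ℝ × ℝ, ‖psiHat ω‖ₑ * ‖modFT f (q.1 * ω, q.2)‖ₑ ^ 2
      ≤ ∫⁻ ω : ℝ, ENNReal.ofReal (|psiHat ω| / |ω|) * B := by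
        refine lintegral_mono fun ω => ?_
        simp only
        rcases eq_or_ne ω 0 with rfl | hω
        · have : psiHat 0 = 0 := by unfold psiHat; norm_num
          simp [this]
        rw [lintegral_const_mul _ (by fun_prop), Measure.volume_eq_prod,
          lintegral_prod _ (by fun_prop)]
        have := lintegral_comp_mul_right_le (fun τ => ∫⁻ ζ : ℝ × ℝ, ‖modFT f (τ, ζ)‖ₑ ^ 2)
          (Measurable.lintegral_prod_right' (f := fun q : ℝ × ℝ × ℝ => ‖modFT f q‖ₑ ^ 2)
            (by fun_prop)) ω hω
        simp only at this ⊢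
        rw [this, ← lintegral_prod (fun q : ℝ × ℝ × ℝ => ‖modFT f q‖ₑ ^ 2) (by fun_prop),
          ← Measure.volume_eq_prod, ← mul_assoc, div_eq_mul_inv,
          ENNReal.ofReal_mul (abs_nonneg _), ← Real.norm_eq_abs (psiHat ω), ofReal_norm]
        gcongr
    _ = (∫⁻ ω : ℝ, ENNReal.ofReal (|psiHat ω| / |ω|)) * B := lintegral_mul_const _ (by fun_prop)
    _ ≤ ENNReal.ofReal (120 * Real.pi) * B := by gcongr; exact lintegral_psiHat_div
    _ = _ := by rw [← mul_assoc, ← ENNReal.ofReal_mul (by positivity)]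

/-- Expanding `ψ` by its Fourier transform factors the double integral over `v` and `v'`; the product
of the two factors is bounded by the sum of their squares. -/
theorem line0_pt (f h : ℝ × ℝ × ℝ → ℂ) (hf : Measurable f) (hfi : Integrable f)
    (hh : Measurable h) (hhi : Integrable h) (q : ℝ × ℝ × ℝ) :
    ‖∫ p : (ℝ × ℝ × ℝ) × (ℝ × ℝ × ℝ), f p.1 * h p.2 * ((psi (q.1 * (p.1.1 - p.2.1)) : ℝ) : ℂ) *
      (wave p.1 q.2 * (starRingEnd ℂ) (wave p.2 q.2))‖ₑ ≤
    ∫⁻ ω : ℝ, (‖psiHat ω‖ₑ * ‖modFT f (q.1 * ω, q.2)‖ₑ ^ 2 +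
      ‖psiHat ω‖ₑ * ‖modFT (fun v => (starRingEnd ℂ) (h v)) (q.1 * ω, q.2)‖ₑ ^ 2) := by
  have hps := continuous_psiHat.measurable
  set G : (ℝ × ℝ × ℝ) × (ℝ × ℝ × ℝ) → ℝ → ℂ := fun p ω =>
    f p.1 * h p.2 * (Complex.exp (Complex.I * ((q.1 * (p.1.1 - p.2.1) * ω : ℝ) : ℂ)) *
      ((psiHat ω : ℝ) : ℂ)) * (wave p.1 q.2 * (starRingEnd ℂ) (wave p.2 q.2)) with hG
  have hGm : Measurable (Function.uncurry G) := by
    simp only [hG]; unfold wave Function.uncurry; fun_prop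
  have hGi : Integrable (Function.uncurry G) (volume.prod volume) := by
    refine (((hfi.mul_prod hhi).mul_prod (integrable_psiHat.ofReal (𝕜 := ℂ))).norm).mono'
      hGm.aestronglyMeasurable (Filter.Eventually.of_forall fun x => ?_)
    simp only [Function.uncurry, hG, norm_mul, norm_expI, norm_wave, RCLike.norm_conj, one_mul,
      mul_one]
    exact le_rfl
  have e1 : ∀ p, f p.1 * h p.2 * ((psi (q.1 * (p.1.1 - p.2.1)) : ℝ) : ℂ) *
      (wave p.1 q.2 * (starRingEnd ℂ) (wave p.2 q.2)) = ∫ ω, G p ω := fun p => by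
    simp only [hG]
    rw [integral_mul_const, integral_const_mul, psi_ft]
  simp_rw [e1]
  rw [integral_integral_swap hGi]
  have e2 : ∀ ω, ∫ p, G p ω = ((psiHat ω : ℝ) : ℂ) * (modFT f (q.1 * ω, q.2) *
      (starRingEnd ℂ) (modFT (fun v => (starRingEnd ℂ) (h v)) (q.1 * ω, q.2))) := fun ω => by
    simp only [modFT]
    rw [← integral_conj, Measure.volume_eq_prod (ℝ × ℝ × ℝ), ← integral_prod_mul,
      ← integral_const_mul]
    refine integral_congr_ae (Filter.Eventually.of_forall fun p => ?_)
    simp only [hG, map_mul, conj_expI, Complex.conj_conj]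
    have : Complex.exp (Complex.I * ((q.1 * (p.1.1 - p.2.1) * ω : ℝ) : ℂ)) =
        Complex.exp (Complex.I * ((p.1.1 * (q.1 * ω) : ℝ) : ℂ)) *
        Complex.exp (Complex.I * ((-(p.2.1 * (q.1 * ω)) : ℝ) : ℂ)) := by
      rw [← Complex.exp_add]; congr 1; push_cast; ring
    rw [this]; ring
  simp_rw [e2]
  refine (enorm_integral_le_lintegral_enorm _).trans (lintegral_mono fun ω => ?_)
  simp only
  rw [enorm_mul, enorm_mul, ← mul_add]
  have hc : ∀ w : ℂ, ‖(starRingEnd ℂ) w‖ₑ = ‖w‖ₑ := fun w => by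
    rw [← ofReal_norm, RCLike.norm_conj, ofReal_norm]
  rw [hc]
  have hr : ‖((psiHat ω : ℝ) : ℂ)‖ₑ = ‖psiHat ω‖ₑ := by
    rw [← ofReal_norm, Complex.norm_real, ofReal_norm]
  rw [hr]
  gcongr
  have key : ∀ a b : ℝ≥0∞, a * b ≤ a ^ 2 + b ^ 2 := fun a b => by
    rcases le_total a b with h | h
    · calc a * b ≤ b * b := by gcongr
        _ = b ^ 2 := (sq b).symm
        _ ≤ _ := le_add_self
    · calc a * b ≤ a * a := by gcongr
        _ = a ^ 2 := (sq a).symm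
        _ ≤ _ := le_self_add
  exact key _ _

/-- The endpoint estimate of the interpolation on `Re z = 0`, where the weights have modulus one. -/
theorem line0 (f h : ℝ × ℝ × ℝ → ℂ) (hf : Measurable f) (hfi : Integrable f)
    (hh : Measurable h) (hhi : Integrable h) :
    ∫⁻ q : ℝ × ℝ × ℝ, ‖∫ p : (ℝ × ℝ × ℝ) × (ℝ × ℝ × ℝ), f p.1 * h p.2 *
      ((psi (q.1 * (p.1.1 - p.2.1)) : ℝ) : ℂ) *
      (wave p.1 q.2 * (starRingEnd ℂ) (wave p.2 q.2))‖ₑ ≤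
    ENNReal.ofReal (120 * Real.pi * (2 * Real.pi) ^ 3) *
      ((∫⁻ v, ‖f v‖ₑ ^ 2) + ∫⁻ v, ‖h v‖ₑ ^ 2) := by
  have hps := continuous_psiHat.measurable
  have hm := measurable_modFT f hf
  have hcm : Measurable fun v => (starRingEnd ℂ) (h v) := Complex.continuous_conj.measurable.comp hh
  have hci : Integrable fun v => (starRingEnd ℂ) (h v) :=
    hhi.norm.mono' hcm.aestronglyMeasurable
      (Filter.Eventually.of_forall fun v => by rw [RCLike.norm_conj])
  have hm2 := measurable_modFT _ hcm
  refine (lintegral_mono (line0_pt f h hf hfi hh hhi)).trans ?_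
  have e : ∀ q : ℝ × ℝ × ℝ, ∫⁻ ω : ℝ, (‖psiHat ω‖ₑ * ‖modFT f (q.1 * ω, q.2)‖ₑ ^ 2 +
      ‖psiHat ω‖ₑ * ‖modFT (fun v => (starRingEnd ℂ) (h v)) (q.1 * ω, q.2)‖ₑ ^ 2) =
      (∫⁻ ω : ℝ, ‖psiHat ω‖ₑ * ‖modFT f (q.1 * ω, q.2)‖ₑ ^ 2) +
      ∫⁻ ω : ℝ, ‖psiHat ω‖ₑ * ‖modFT (fun v => (starRingEnd ℂ) (h v)) (q.1 * ω, q.2)‖ₑ ^ 2 :=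
    fun q => lintegral_add_left (by fun_prop) _
  simp_rw [e]
  rw [lintegral_add_left (Measurable.lintegral_prod_right (by fun_prop)), mul_add]
  refine add_le_add (line0_aux f hf hfi) ((line0_aux _ hcm hci).trans (le_of_eq ?_))
  congr 1
  refine lintegral_congr fun v => ?_
  rw [← ofReal_norm, RCLike.norm_conj, ofReal_norm]

/-! ### The analytic family of trilinear forms and the line `Re z = 1` -/

/-- The frequencies with `a ≤ |ξ| ≤ b`, for `0 ≤ a`. -/
def band (a b : ℝ) : Set ℝ := Set.Icc (-b) (-a) ∪ Set.Icc a b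

theorem measurableSet_band (a b : ℝ) : MeasurableSet (band a b) :=
  measurableSet_Icc.union measurableSet_Icc

theorem band_abs {a b ξ : ℝ} (hb : 0 ≤ a) (h : ξ ∈ band a b) : a ≤ |ξ| ∧ |ξ| ≤ b := by
  rcases h with h | h
  · rw [abs_of_nonpos (by linarith [h.2])]; constructor <;> linarith [h.1, h.2]
  · rw [abs_of_nonneg (by linarith [h.1])]; exact h

theorem volume_band_lt_top (a b : ℝ) : volume (band a b) < ⊤ :=
  (measure_union_le _ _).trans_lt (ENNReal.add_lt_top.2 ⟨by simp, by simp⟩)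

instance (a b : ℝ) : IsFiniteMeasure (volume.restrict (band a b)) :=
  ⟨by rw [Measure.restrict_apply_univ]; exact volume_band_lt_top a b⟩

/-- `l^{-2z}` for `l > 0`. -/
def lamPow (z : ℂ) (l : ℝ) : ℂ := Complex.exp (z * ((-2 * Real.log l : ℝ) : ℂ))

/-- `|ξ|^{z/2}` for `ξ ≠ 0`. -/
def freqPow (z : ℂ) (ξ : ℝ) : ℂ := Complex.exp (z * ((Real.log |ξ| / 2 : ℝ) : ℂ))

theorem measurable_lamPow (z : ℂ) : Measurable (lamPow z) := by unfold lamPow; fun_prop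

theorem measurable_freqPow (z : ℂ) : Measurable (freqPow z) := by
  unfold freqPow
  have : Measurable fun ξ : ℝ => |ξ| := continuous_abs.measurable
  fun_prop

theorem norm_lamPow (z : ℂ) (l : ℝ) : ‖lamPow z l‖ = Real.exp (z.re * (-2 * Real.log l)) := by
  rw [lamPow, Complex.norm_exp, Complex.re_mul_ofReal]

theorem norm_freqPow (z : ℂ) (ξ : ℝ) : ‖freqPow z ξ‖ = Real.exp (z.re * (Real.log |ξ| / 2)) := by
  rw [freqPow, Complex.norm_exp, Complex.re_mul_ofReal]

theorem log_bound {a b x : ℝ} (ha : 0 < a) (h1 : a ≤ x) (h2 : x ≤ b) :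
    |Real.log x| ≤ |Real.log a| + |Real.log b| := by
  have h3 := Real.log_le_log ha h1
  have h4 := Real.log_le_log (ha.trans_le h1) h2
  rw [abs_le]
  constructor
  · linarith [neg_abs_le (Real.log a), abs_nonneg (Real.log b)]
  · linarith [le_abs_self (Real.log b), abs_nonneg (Real.log a)]

theorem exp_le_of_abs {r l M : ℝ} (h : |l| ≤ M) : Real.exp (r * l) ≤ Real.exp (|r| * M) := by
  refine Real.exp_le_exp.2 ((le_abs_self _).trans ?_)
  rw [abs_mul]; gcongr

theorem integrable_lamPow (z : ℂ) (a b : ℝ) (ha : 0 < a) :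
    Integrable (lamPow z) (volume.restrict (Set.Icc a b)) := by
  refine Integrable.of_bound (measurable_lamPow z).aestronglyMeasurable
    (Real.exp (|z.re| * (2 * (|Real.log a| + |Real.log b|)))) ?_
  filter_upwards [ae_restrict_mem measurableSet_Icc] with l hl
  rw [norm_lamPow]
  refine exp_le_of_abs ?_
  rw [abs_mul, abs_neg, abs_of_pos (by norm_num : (0 : ℝ) < 2)]
  have := log_bound ha hl.1 hl.2
  linarith

theorem integrable_freqPow (z : ℂ) (a b : ℝ) (ha : 0 < a) :
    Integrable (freqPow z) (volume.restrict (band a b)) := by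
  refine Integrable.of_bound (measurable_freqPow z).aestronglyMeasurable
    (Real.exp (|z.re| * (|Real.log a| + |Real.log b|))) ?_
  filter_upwards [ae_restrict_mem (measurableSet_band a b)] with l hl
  rw [norm_freqPow]
  refine exp_le_of_abs ?_
  obtain ⟨h1, h2⟩ := band_abs ha.le hl
  have h3 := log_bound ha h1 h2
  have h4 := abs_nonneg (Real.log |l|)
  rw [abs_div, abs_of_pos (by norm_num : (0 : ℝ) < 2)]
  linarith

/-- The scale integral `∫ l^{-2z} ψ(lτ) dl` over `[a, b]`. -/
def lamInt (z : ℂ) (a b τ : ℝ) : ℂ := ∫ l in Set.Icc a b, lamPow z l * ((psi (l * τ) : ℝ) : ℂ)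

/-- The truncated oscillatory integral `∫ |ξ|^{z/2} e^{i(τξ³+xξ)} dξ` over `a ≤ |ξ| ≤ b`. -/
def oscInt (z : ℂ) (a b τ x : ℝ) : ℂ :=
  ∫ ξ in band a b, freqPow z ξ * Complex.exp (Complex.I * ((τ * ξ ^ 3 + x * ξ : ℝ) : ℂ))

theorem lamInt_line1 (z : ℂ) (hz : z.re = 1) (a b τ : ℝ) (ha : 0 < a) :
    ‖lamInt z a b τ‖ ≤ 120 * Real.pi * |τ| := by
  rcases eq_or_ne τ 0 with rfl | hτ
  · have : psi 0 = 0 := by simp [psi]; norm_num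
    simp [lamInt, this]
  refine (norm_integral_le_integral_norm _).trans ?_
  have e : ∫ l in Set.Icc a b, ‖lamPow z l * ((psi (l * τ) : ℝ) : ℂ)‖ =
      ∫ l in Set.Icc a b, |psi (l * τ)| / l ^ 2 := by
    refine setIntegral_congr_fun measurableSet_Icc fun l hl => ?_
    have h0 : 0 < l := ha.trans_le hl.1
    rw [norm_mul, norm_lamPow, hz, Complex.norm_real, Real.norm_eq_abs, one_mul,
      show -2 * Real.log l = Real.log (l ^ 2)⁻¹ by rw [Real.log_inv, Real.log_pow]; norm_num,
      Real.exp_log (by positivity)]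
    field_simp
  rw [e]
  exact (setIntegral_le_integral (psi_scale_sq τ hτ).1
      (Filter.Eventually.of_forall fun l => by positivity)).trans (psi_scale_sq τ hτ).2

theorem lamInt_half (a b τ : ℝ) (ha : 0 < a) :
    lamInt (1 / 2) a b τ = ((∫ l in Set.Icc a b, psi (l * τ) / l : ℝ) : ℂ) := by
  rw [lamInt, ← integral_complex_ofReal]
  refine setIntegral_congr_fun measurableSet_Icc fun l hl => ?_
  have h0 : 0 < l := ha.trans_le hl.1
  simp only [lamPow]
  have : (1 / 2 : ℂ) * ((-2 * Real.log l : ℝ) : ℂ) = ((Real.log l⁻¹ : ℝ) : ℂ) := by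
    rw [Real.log_inv]; push_cast; ring
  rw [this, ← Complex.ofReal_exp, Real.exp_log (by positivity)]
  push_cast; ring

theorem lamInt_half_bound (a b τ : ℝ) (ha : 0 < a) : ‖lamInt (1 / 2) a b τ‖ ≤ 120 * Real.pi := by
  rw [lamInt_half a b τ ha, Complex.norm_real]
  refine (norm_integral_le_integral_norm _).trans ?_
  simp_rw [norm_div, Real.norm_eq_abs]
  exact kappa_bound τ _

theorem oscInt_line1 (z : ℂ) (hz : z.re = 1) (a b τ x : ℝ) (ha : 0 < a) (hab : a ≤ b)
    (hτ : τ ≠ 0) : ‖oscInt z a b τ x‖ ≤ 28 * (1 + |z.im|) / √|τ| := by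
  have hs : (z / 2).re = 1 / 2 := by
    rw [show (z / 2) = z / ((2 : ℝ) : ℂ) by norm_num, Complex.div_ofReal_re, hz]
  have him : |(z / 2).im| ≤ |z.im| := by
    rw [show (z / 2) = z / ((2 : ℝ) : ℂ) by norm_num, Complex.div_ofReal_im, abs_div]
    exact div_le_self (abs_nonneg _) (by norm_num)
  have hInt : IntegrableOn (fun ξ => freqPow z ξ *
      Complex.exp (Complex.I * ((τ * ξ ^ 3 + x * ξ : ℝ) : ℂ))) (band a b) := by
    refine (integrable_freqPow z a b ha).mul_bdd (c := 1)
      (Continuous.aestronglyMeasurable (by fun_prop))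
      (Filter.Eventually.of_forall fun ξ => (norm_expI _).le)
  have hdisj : Disjoint (Set.Icc (-b) (-a)) (Set.Icc a b) := by
    rw [Set.disjoint_left]
    intro y h1 h2
    linarith [h1.2, h2.1]
  have e2 : ∫ ξ in Set.Icc a b, freqPow z ξ *
      Complex.exp (Complex.I * ((τ * ξ ^ 3 + x * ξ : ℝ) : ℂ)) =
      ∫ ξ in a..b, airyInt (z / 2) τ x ξ := by
    rw [integral_Icc_eq_integral_Ioc, intervalIntegral.integral_of_le hab]
    refine setIntegral_congr_fun measurableSet_Ioc fun ξ hξ => ?_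
    simp only [airyInt, freqPow]
    rw [abs_of_pos (ha.trans hξ.1)]
    congr 2
    push_cast; ring
  have e1 : ∫ ξ in Set.Icc (-b) (-a), freqPow z ξ *
      Complex.exp (Complex.I * ((τ * ξ ^ 3 + x * ξ : ℝ) : ℂ)) =
      ∫ ξ in a..b, airyInt (z / 2) (-τ) (-x) ξ := by
    rw [integral_Icc_eq_integral_Ioc, ← intervalIntegral.integral_of_le (by linarith),
      ← intervalIntegral.integral_comp_neg]
    rw [intervalIntegral.integral_of_le hab, intervalIntegral.integral_of_le hab]
    refine setIntegral_congr_fun measurableSet_Ioc fun ξ hξ => ?_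
    simp only [airyInt, freqPow]
    rw [abs_neg, abs_of_pos (ha.trans hξ.1)]
    congr 2
    · push_cast; ring
    · push_cast; ring
  rw [oscInt, band, setIntegral_union hdisj measurableSet_Icc
    (hInt.mono_set Set.subset_union_left) (hInt.mono_set Set.subset_union_right), e1, e2]
  refine (norm_add_le _ _).trans ?_
  have h1 := airy_bound hs (-τ) (-x) a b (neg_ne_zero.2 hτ) ha hab
  have h2 := airy_bound hs τ x a b hτ ha hab
  rw [abs_neg] at h1
  have h3 : 14 * (1 + |(z / 2).im|) / √|τ| ≤ 14 * (1 + |z.im|) / √|τ| := by gcongr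
  calc _ ≤ 14 * (1 + |z.im|) / √|τ| + 14 * (1 + |z.im|) / √|τ| := add_le_add (h1.trans h3) (h2.trans h3)
    _ = _ := by ring

/-- On `Re z = 1` the growth `|τ|` of the scale integral cancels the decay `|τ|^{-1/2}` of each of the
two oscillatory integrals. -/
theorem line1_bound (z : ℂ) (hz : z.re = 1) (a b c d τ x y : ℝ) (hc : 0 < c)
    (ha : 0 < a) (hab : a ≤ b) :
    ‖lamInt z c d τ * (oscInt z a b τ x * oscInt z a b τ y)‖ ≤
      94080 * Real.pi * (1 + |z.im|) ^ 2 := by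
  rcases eq_or_ne τ 0 with rfl | hτ
  · have h0 : ‖lamInt z c d 0‖ ≤ 120 * Real.pi * |0| := lamInt_line1 z hz c d 0 hc
    have : lamInt z c d 0 = 0 := by simpa using h0
    rw [this, zero_mul, norm_zero]; positivity
  have hτ0 : 0 < |τ| := abs_pos.2 hτ
  rw [norm_mul, norm_mul]
  calc _ ≤ (120 * Real.pi * |τ|) * ((28 * (1 + |z.im|) / √|τ|) * (28 * (1 + |z.im|) / √|τ|)) := by
        gcongr
        · exact lamInt_line1 z hz c d τ hc
        · exact oscInt_line1 z hz a b τ x ha hab hτ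
        · exact oscInt_line1 z hz a b τ y ha hab hτ
    _ = 94080 * Real.pi * (1 + |z.im|) ^ 2 * (|τ| / (√|τ| * √|τ|)) := by ring
    _ = _ := by rw [Real.mul_self_sqrt hτ0.le, div_self hτ0.ne', mul_one]

theorem oscInt_trivial (z : ℂ) (a b τ x : ℝ) :
    ‖oscInt z a b τ x‖ ≤ ∫ ξ in band a b, ‖freqPow z ξ‖ := by
  refine (norm_integral_le_integral_norm _).trans (le_of_eq ?_)
  simp_rw [norm_mul, norm_expI, mul_one]

/-- The integrand of the analytic family, at `x = ((v, v'), (λ, ξ, η))`. -/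
def kern (z : ℂ) (f h : ℝ × ℝ × ℝ → ℂ) (x : ((ℝ × ℝ × ℝ) × (ℝ × ℝ × ℝ)) × (ℝ × ℝ × ℝ)) : ℂ :=
  f x.1.1 * h x.1.2 * (lamPow z x.2.1 * (freqPow z x.2.2.1 * freqPow z x.2.2.2)) *
    (((psi (x.2.1 * (x.1.1.1 - x.1.2.1)) : ℝ) : ℂ) *
      (wave x.1.1 x.2.2 * (starRingEnd ℂ) (wave x.1.2 x.2.2)))

/-- Lebesgue measure on the parameters `(λ, ξ, η)` with `λ ∈ [c, d]` and `ξ`, `η` in `band a b`. -/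
abbrev parMeasure (a b c d : ℝ) : Measure (ℝ × ℝ × ℝ) :=
  (volume.restrict (Set.Icc c d)).prod ((volume.restrict (band a b)).prod (volume.restrict (band a b)))

section
variable (z : ℂ) (f h : ℝ × ℝ × ℝ → ℂ) (a b c d : ℝ)

theorem measurable_kern (hf : Measurable f) (hh : Measurable h) : Measurable (kern z f h) := by
  have h1 := measurable_lamPow z
  have h2 := measurable_freqPow z
  have h3 := continuous_psi.measurable
  unfold kern wave
  fun_prop

theorem integrable_kern (hf : Integrable f) (hh : Integrable h) (ha : 0 < a) (hc : 0 < c) :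
    Integrable (kern z f h) (((volume : Measure (ℝ × ℝ × ℝ)).prod volume).prod
      (parMeasure a b c d)) := by
  have h1 := (hf.mul_prod hh).mul_prod ((integrable_lamPow z c d hc).mul_prod
    ((integrable_freqPow z a b ha).mul_prod (integrable_freqPow z a b ha)))
  refine h1.mul_bdd (c := 60) (Measurable.aestronglyMeasurable ?_)
    (Filter.Eventually.of_forall fun x => ?_)
  · have h3 := continuous_psi.measurable
    unfold wave
    fun_prop
  · rw [norm_mul, norm_mul, RCLike.norm_conj, norm_wave, norm_wave, mul_one, mul_one,
      Complex.norm_real]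
    exact (psi_bounds _).2.1

/-- The form `∫ kern z f h` over space-time pairs and the truncated parameters `(λ, ξ, η)`. -/
def trilin : ℂ := ∫ x, kern z f h x ∂(((volume : Measure (ℝ × ℝ × ℝ)).prod volume).prod
      (parMeasure a b c d))

theorem trilin_eq_space (hf : Integrable f) (hh : Integrable h) (ha : 0 < a) (hc : 0 < c) :
    trilin z f h a b c d = ∫ p : (ℝ × ℝ × ℝ) × (ℝ × ℝ × ℝ), f p.1 * h p.2 *
      (lamInt z c d (p.1.1 - p.2.1) * (oscInt z a b (p.1.1 - p.2.1) (p.1.2.1 - p.2.2.1) *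
        oscInt z a b (p.1.1 - p.2.1) (p.1.2.2 - p.2.2.2))) := by
  rw [trilin, integral_prod _ (integrable_kern z f h a b c d hf hh ha hc),
    Measure.volume_eq_prod (ℝ × ℝ × ℝ)]
  refine integral_congr_ae (Filter.Eventually.of_forall fun p => ?_)
  simp only [lamInt, oscInt]
  rw [← integral_prod_mul, ← integral_prod_mul, ← integral_const_mul]
  refine integral_congr_ae (Filter.Eventually.of_forall fun q => ?_)
  simp only [kern, wave, conj_expI]
  have : ∀ r s : ℝ, Complex.exp (Complex.I * (r : ℂ)) * Complex.exp (Complex.I * (s : ℂ)) =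
      Complex.exp (Complex.I * ((r + s : ℝ) : ℂ)) := fun r s => by
    rw [← Complex.exp_add]; push_cast; ring_nf
  rw [this]
  have e2 : p.1.1 * (q.2.1 ^ 3 + q.2.2 ^ 3) + p.1.2.1 * q.2.1 + p.1.2.2 * q.2.2 +
      -(p.2.1 * (q.2.1 ^ 3 + q.2.2 ^ 3) + p.2.2.1 * q.2.1 + p.2.2.2 * q.2.2) =
      ((p.1.1 - p.2.1) * q.2.1 ^ 3 + (p.1.2.1 - p.2.2.1) * q.2.1) +
      ((p.1.1 - p.2.1) * q.2.2 ^ 3 + (p.1.2.2 - p.2.2.2) * q.2.2) := by ring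
  rw [e2, ← this]
  ring

theorem trilin_eq_freq (hf : Integrable f) (hh : Integrable h) (ha : 0 < a) (hc : 0 < c) :
    trilin z f h a b c d = ∫ q, (lamPow z q.1 * (freqPow z q.2.1 * freqPow z q.2.2)) *
      (∫ p : (ℝ × ℝ × ℝ) × (ℝ × ℝ × ℝ), f p.1 * h p.2 *
      ((psi (q.1 * (p.1.1 - p.2.1)) : ℝ) : ℂ) *
      (wave p.1 q.2 * (starRingEnd ℂ) (wave p.2 q.2))) ∂(parMeasure a b c d) := by
  rw [trilin, integral_prod_symm _ (integrable_kern z f h a b c d hf hh ha hc)]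
  refine integral_congr_ae (Filter.Eventually.of_forall fun q => ?_)
  simp only
  rw [← integral_const_mul, Measure.volume_eq_prod (ℝ × ℝ × ℝ)]
  refine integral_congr_ae (Filter.Eventually.of_forall fun p => ?_)
  simp only [kern]
  ring

theorem trilin_line0 (hz : z.re = 0) (hf : Integrable f) (hh : Integrable h)
    (hfm : Measurable f) (hhm : Measurable h) (ha : 0 < a) (hc : 0 < c) :
    ‖trilin z f h a b c d‖ₑ ≤ ENNReal.ofReal (120 * Real.pi * (2 * Real.pi) ^ 3) *
      ((∫⁻ v, ‖f v‖ₑ ^ 2) + ∫⁻ v, ‖h v‖ₑ ^ 2) := by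
  rw [trilin_eq_freq z f h a b c d hf hh ha hc]
  refine (enorm_integral_le_lintegral_enorm _).trans ?_
  refine le_trans ?_ (line0 f h hfm hf hhm hh)
  have hle : parMeasure a b c d ≤ volume := by
    rw [parMeasure, Measure.prod_restrict, Measure.prod_restrict]
    exact Measure.restrict_le_self
  refine (lintegral_mono' hle le_rfl).trans (lintegral_mono fun q => ?_)
  simp only
  rw [enorm_mul]
  have : ‖lamPow z q.1 * (freqPow z q.2.1 * freqPow z q.2.2)‖ₑ = 1 := by
    rw [← ofReal_norm, norm_mul, norm_mul, norm_lamPow, norm_freqPow, norm_freqPow, hz]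
    simp
  rw [this, one_mul]

theorem trilin_line1 (hz : z.re = 1) (hf : Integrable f) (hh : Integrable h)
    (ha : 0 < a) (hab : a ≤ b) (hc : 0 < c) :
    ‖trilin z f h a b c d‖ ≤ 94080 * Real.pi * (1 + |z.im|) ^ 2 *
      ((∫ v, ‖f v‖) * ∫ v, ‖h v‖) := by
  rw [trilin_eq_space z f h a b c d hf hh ha hc]
  calc _ ≤ ∫ p : (ℝ × ℝ × ℝ) × (ℝ × ℝ × ℝ), ‖f p.1 * h p.2‖ *
        (94080 * Real.pi * (1 + |z.im|) ^ 2) := by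
        refine norm_integral_le_of_norm_le ((hf.mul_prod hh).norm.mul_const _)
          (Filter.Eventually.of_forall fun p => ?_)
        rw [norm_mul]
        exact mul_le_mul_of_nonneg_left (line1_bound z hz a b c d _ _ _ hc ha hab) (norm_nonneg _)
    _ = _ := by
        rw [integral_mul_const, mul_comm, Measure.volume_eq_prod (ℝ × ℝ × ℝ), ← integral_prod_mul]
        simp_rw [norm_mul]
end

/-! ### Interpolation between the two lines -/

/-- The analytic family `f · e^{z ell}` through `f`; at `z = 1/2` it interpolates between an `L²`
function at `Re z = 0` and an `L¹` function at `Re z = 1`. -/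
def expTwist (f : ℝ × ℝ × ℝ → ℂ) (ell : ℝ × ℝ × ℝ → ℝ) (z : ℂ) (v : ℝ × ℝ × ℝ) : ℂ :=
  f v * Complex.exp (z * (ell v : ℂ))

theorem norm_expTwist (f : ℝ × ℝ × ℝ → ℂ) (ell : ℝ × ℝ × ℝ → ℝ) (z : ℂ) (v : ℝ × ℝ × ℝ) :
    ‖expTwist f ell z v‖ = ‖f v‖ * Real.exp (z.re * ell v) := by
  rw [expTwist, norm_mul, Complex.norm_exp, Complex.re_mul_ofReal]

theorem measurable_expTwist {f : ℝ × ℝ × ℝ → ℂ} {ell : ℝ × ℝ × ℝ → ℝ} (hf : Measurable f)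
    (hl : Measurable ell) (z : ℂ) : Measurable (expTwist f ell z) := by
  unfold expTwist; fun_prop

theorem integrable_expTwist {f : ℝ × ℝ × ℝ → ℂ} {ell : ℝ × ℝ × ℝ → ℝ} (hf : Integrable f)
    (hl : Measurable ell) {M : ℝ} (hM : ∀ v, |ell v| ≤ M) (z : ℂ) :
    Integrable (expTwist f ell z) := by
  refine hf.mul_bdd (c := Real.exp (|z.re| * M)) (Measurable.aestronglyMeasurable (by fun_prop))
    (Filter.Eventually.of_forall fun v => ?_)
  rw [Complex.norm_exp, Complex.re_mul_ofReal]
  exact exp_le_of_abs (hM v)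

/-- The geometric mean of the constants on the lines `Re z = 0` and `Re z = 1`. -/
def interpConst : ℝ :=
  √(240 * Real.pi * (2 * Real.pi) ^ 3) * √(188160 * Real.pi * Real.exp 1)

/-- Stein interpolation: the bound `O(E)` on `Re z = 0` and `O(E²)` on `Re z = 1` give `O(E^{3/2})` at
`z = 1/2`, uniformly in the truncation parameters `a`, `b`, `c`, `d` and in the bound `M` on `ell`. -/
theorem interp_bound (f : ℝ × ℝ × ℝ → ℂ) (ell : ℝ × ℝ × ℝ → ℝ) (M E a b c d : ℝ)
    (hf : Integrable f) (hfm : Measurable f) (hl : Measurable ell) (hM : ∀ v, |ell v| ≤ M)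
    (hE : 0 ≤ E) (h0 : ∫⁻ v, ‖f v‖ₑ ^ 2 ≤ ENNReal.ofReal E)
    (h1 : ∫ v, ‖f v‖ * Real.exp (ell v) ≤ E) (ha : 0 < a) (hab : a ≤ b) (hc : 0 < c) :
    ‖trilin (1 / 2) (expTwist f ell (1 / 2))
      (expTwist (fun v => (starRingEnd ℂ) (f v)) ell (1 / 2)) a b c d‖ ≤
      interpConst * (√E * E) := by
  set g : ℝ × ℝ × ℝ → ℂ := fun v => (starRingEnd ℂ) (f v) with hg
  have hgm : Measurable g := Complex.continuous_conj.measurable.comp hfm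
  have hgn : ∀ v, ‖g v‖ = ‖f v‖ := fun v => RCLike.norm_conj _
  have hgi : Integrable g := hf.norm.mono' hgm.aestronglyMeasurable
    (Filter.Eventually.of_forall fun v => (hgn v).le)
  set μ := ((volume : Measure (ℝ × ℝ × ℝ)).prod (volume : Measure (ℝ × ℝ × ℝ))).prod (parMeasure a b c d) with hμ
  set L : ((ℝ × ℝ × ℝ) × (ℝ × ℝ × ℝ)) × (ℝ × ℝ × ℝ) → ℝ := fun x =>
    ell x.1.1 + ell x.1.2 + (-2 * Real.log x.2.1 + (Real.log |x.2.2.1| / 2 + Real.log |x.2.2.2| / 2))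
    with hL
  have hLm : Measurable L := by
    have : Measurable fun ξ : ℝ => |ξ| := continuous_abs.measurable
    simp only [hL]; fun_prop
  have eT : ∀ z : ℂ, trilin z (expTwist f ell z) (expTwist g ell z) a b c d =
      ∫ x, kern 0 f g x * Complex.exp (z * (L x : ℂ)) ∂μ := fun z => by
    refine integral_congr_ae (Filter.Eventually.of_forall fun x => ?_)
    simp only [kern, expTwist, lamPow, freqPow, hL, zero_mul, Complex.exp_zero]
    push_cast
    rw [mul_add, mul_add, mul_add, mul_add, Complex.exp_add, Complex.exp_add, Complex.exp_add,
      Complex.exp_add]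
    ring
  have hk := integrable_kern 0 f g a b c d hf hgi ha hc
  set M' : ℝ := M + M + (2 * (|Real.log c| + |Real.log d|) +
    ((|Real.log a| + |Real.log b|) + (|Real.log a| + |Real.log b|))) with hM'
  have hLM : ∀ᵐ x ∂μ, |L x| ≤ M' := by
    have hq : ∀ᵐ q ∂(parMeasure a b c d), q ∈ Set.Icc c d ×ˢ (band a b ×ˢ band a b) := by
      rw [parMeasure, Measure.prod_restrict, Measure.prod_restrict]
      exact ae_restrict_mem (measurableSet_Icc.prod
        ((measurableSet_band a b).prod (measurableSet_band a b)))
    have := (Measure.quasiMeasurePreserving_snd (μ := (volume : Measure (ℝ × ℝ × ℝ)).prod (volume : Measure (ℝ × ℝ × ℝ)))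
      (ν := parMeasure a b c d)).ae hq
    filter_upwards [this] with x hx
    obtain ⟨hx1, hx2, hx3⟩ := hx
    have l1 := log_bound hc hx1.1 hx1.2
    have l2 := log_bound ha (band_abs ha.le hx2).1 (band_abs ha.le hx2).2
    have l3 := log_bound ha (band_abs ha.le hx3).1 (band_abs ha.le hx3).2
    have m1 := hM x.1.1
    have m2 := hM x.1.2
    have n1 := abs_nonneg (Real.log a)
    have n2 := abs_nonneg (Real.log b)
    simp only [hL, hM']
    rw [abs_le] at *
    constructor <;> linarith [l1.1, l1.2, l2.1, l2.2, l3.1, l3.2, m1.1, m1.2, m2.1, m2.2]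
  -- the factor `exp (z ^ 2)` absorbs the growth `(1 + |Im z|) ^ 2` on the line `Re z = 1`
  set Φ : ℂ → ℂ := fun z => Complex.exp (z ^ 2) *
    ∫ x, kern 0 f g x * Complex.exp (z * (L x : ℂ)) ∂μ with hΦ
  have hd : Differentiable ℂ Φ := by
    have := exp_family_differentiable μ (kern 0 f g) L M' hk hLm hLM
    have h2 : Differentiable ℂ fun z : ℂ => Complex.exp (z ^ 2) := by fun_prop
    exact h2.mul this
  have hexp : ∀ z : ℂ, ‖Complex.exp (z ^ 2)‖ = Real.exp (z.re ^ 2 - z.im ^ 2) := fun z => by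
    rw [Complex.norm_exp, sq z, Complex.mul_re]; ring_nf
  have hB : BddAbove ((norm ∘ Φ) '' Complex.HadamardThreeLines.verticalClosedStrip 0 1) := by
    refine ⟨Real.exp 1 * ∫ x, ‖kern 0 f g x‖ * Real.exp M' ∂μ, ?_⟩
    rintro _ ⟨z, hz, rfl⟩
    have hz0 : 0 ≤ z.re := hz.1
    have hz1 : z.re ≤ 1 := hz.2
    simp only [Function.comp, hΦ, norm_mul]
    refine mul_le_mul ?_ (exp_family_bounded μ _ L M' hk hLM z hz0 hz1) (norm_nonneg _)
      (Real.exp_pos _).le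
    rw [hexp]
    exact Real.exp_le_exp.2 (by nlinarith [sq_nonneg z.im])
  have hA : ∀ z ∈ Complex.re ⁻¹' {0}, ‖Φ z‖ ≤ 240 * Real.pi * (2 * Real.pi) ^ 3 * E := by
    intro z hz
    have hz : z.re = 0 := hz
    simp only [hΦ, ← eT, norm_mul]
    have hn : ∀ u : ℝ × ℝ × ℝ → ℂ, (∀ v, ‖u v‖ = ‖f v‖) →
        ∫⁻ v, ‖expTwist u ell z v‖ₑ ^ 2 ≤ ENNReal.ofReal E := fun u hu => by
      refine le_trans (le_of_eq (lintegral_congr fun v => ?_)) h0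
      rw [← ofReal_norm, norm_expTwist, hz, hu, zero_mul, Real.exp_zero, mul_one, ofReal_norm]
    have h2 := trilin_line0 z (expTwist f ell z) (expTwist g ell z) a b c d hz
      (integrable_expTwist hf hl hM z) (integrable_expTwist hgi hl hM z)
      (measurable_expTwist hfm hl z) (measurable_expTwist hgm hl z) ha hc
    have h3 : ‖trilin z (expTwist f ell z) (expTwist g ell z) a b c d‖ ≤
        240 * Real.pi * (2 * Real.pi) ^ 3 * E := by
      rw [← ofReal_norm] at h2
      refine (ENNReal.ofReal_le_ofReal_iff (by positivity)).1 (h2.trans ?_)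
      calc _ ≤ ENNReal.ofReal (120 * Real.pi * (2 * Real.pi) ^ 3) *
            (ENNReal.ofReal E + ENNReal.ofReal E) := by
            gcongr
            · exact hn f fun _ => rfl
            · exact hn g hgn
        _ = _ := by
            rw [← ENNReal.ofReal_add hE hE, ← ENNReal.ofReal_mul (by positivity)]
            congr 1; ring
    have h4 : ‖Complex.exp (z ^ 2)‖ ≤ 1 := by
      rw [hexp, hz]
      exact Real.exp_le_one_iff.2 (by nlinarith [sq_nonneg z.im])
    exact (mul_le_of_le_one_left (norm_nonneg _) h4).trans h3
  have hBd : ∀ z ∈ Complex.re ⁻¹' {1}, ‖Φ z‖ ≤ 188160 * Real.pi * Real.exp 1 * E ^ 2 := by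
    intro z hz
    have hz : z.re = 1 := hz
    simp only [hΦ, ← eT, norm_mul]
    have hn : ∀ u : ℝ × ℝ × ℝ → ℂ, (∀ v, ‖u v‖ = ‖f v‖) →
        ∫ v, ‖expTwist u ell z v‖ ≤ E := fun u hu => by
      refine le_trans (le_of_eq (integral_congr_ae (Filter.Eventually.of_forall fun v => ?_))) h1
      simp only
      rw [norm_expTwist, hz, hu, one_mul]
    have h2 := trilin_line1 z (expTwist f ell z) (expTwist g ell z) a b c d hz
      (integrable_expTwist hf hl hM z) (integrable_expTwist hgi hl hM z) ha hab hc
    rw [hexp, hz]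
    have h5 : (∫ v, ‖expTwist f ell z v‖) * ∫ v, ‖expTwist g ell z v‖ ≤ E * E :=
      mul_le_mul (hn f fun _ => rfl) (hn g hgn) (integral_nonneg fun _ => norm_nonneg _) hE
    have h6 : (1 + |z.im|) ^ 2 ≤ 2 * Real.exp (z.im ^ 2) := by
      have := Real.add_one_le_exp (z.im ^ 2)
      nlinarith [sq_nonneg (1 - |z.im|), sq_abs z.im]
    calc _ ≤ Real.exp (1 ^ 2 - z.im ^ 2) * (94080 * Real.pi * (2 * Real.exp (z.im ^ 2)) * (E * E)) := by
          refine mul_le_mul_of_nonneg_left (h2.trans ?_) (Real.exp_pos _).le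
          refine mul_le_mul ?_ h5 (mul_nonneg (integral_nonneg fun _ => norm_nonneg _)
            (integral_nonneg fun _ => norm_nonneg _)) (by positivity)
          gcongr
      _ = 188160 * Real.pi * (Real.exp (1 ^ 2 - z.im ^ 2) * Real.exp (z.im ^ 2)) * E ^ 2 := by ring
      _ = _ := by rw [← Real.exp_add]; norm_num
  have hz2 : ((1 / 2 : ℂ)).re = 1 / 2 := by
    rw [show (1 / 2 : ℂ) = ((1 / 2 : ℝ) : ℂ) by push_cast; ring, Complex.ofReal_re]
  have hT := Complex.HadamardThreeLines.norm_le_interp_of_mem_verticalClosedStrip₀₁' Φ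
    (z := 1 / 2) (a := 240 * Real.pi * (2 * Real.pi) ^ 3 * E)
    (b := 188160 * Real.pi * Real.exp 1 * E ^ 2)
    (by
      show ((1 / 2 : ℂ)).re ∈ Set.Icc (0 : ℝ) 1
      rw [hz2]; norm_num) hd.diffContOnCl hB hA hBd
  rw [hz2, show (1 : ℝ) - 1 / 2 = 1 / 2 by norm_num, ← Real.sqrt_eq_rpow, ← Real.sqrt_eq_rpow,
    Real.sqrt_mul (by positivity) E, Real.sqrt_mul (by positivity) (E ^ 2), Real.sqrt_sq hE] at hT
  have h7 : ‖trilin (1 / 2) (expTwist f ell (1 / 2)) (expTwist g ell (1 / 2)) a b c d‖ ≤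
      ‖Φ (1 / 2)‖ := by
    simp only [hΦ, ← eT, norm_mul]
    refine le_mul_of_one_le_left (norm_nonneg _) ?_
    rw [Complex.norm_exp, show ((1 / 2 : ℂ) ^ 2) = ((1 / 4 : ℝ) : ℂ) by push_cast; norm_num,
      Complex.ofReal_re]
    exact Real.one_le_exp (by norm_num)
  refine h7.trans (hT.trans (le_of_eq ?_))
  unfold interpConst
  ring

/-! ### The weighted restriction inequality on frequency bands -/

/-- The space-time Fourier transform of `F` restricted to the surface `τ = ξ³ + η³`. -/
def waveFT (F : ℝ × ℝ × ℝ → ℂ) (ζ : ℝ × ℝ) : ℂ := ∫ v : ℝ × ℝ × ℝ, wave v ζ * F v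

theorem measurable_waveFT (f : ℝ × ℝ × ℝ → ℂ) (hf : Measurable f) : Measurable (waveFT f) := by
  have : Measurable (Function.uncurry fun (ζ : ℝ × ℝ) (v : ℝ × ℝ × ℝ) => wave v ζ * f v) := by
    unfold wave Function.uncurry; fun_prop
  exact (this.stronglyMeasurable.integral_prod_right).measurable

theorem ae_time_ne : ∀ᵐ p : (ℝ × ℝ × ℝ) × (ℝ × ℝ × ℝ), p.1.1 - p.2.1 ≠ 0 := by
  rw [ae_iff]
  simp only [ne_eq, not_not]
  have hm : MeasurableSet {p : (ℝ × ℝ × ℝ) × (ℝ × ℝ × ℝ) | p.1.1 - p.2.1 = 0} :=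
    measurableSet_eq_fun (by fun_prop) (by fun_prop)
  rw [Measure.volume_eq_prod, Measure.measure_prod_null hm]
  refine Filter.Eventually.of_forall fun v => ?_
  have : (Prod.mk v ⁻¹' {p : (ℝ × ℝ × ℝ) × (ℝ × ℝ × ℝ) | p.1.1 - p.2.1 = 0}) =
      ({v.1} : Set ℝ) ×ˢ (Set.univ : Set (ℝ × ℝ)) := by
    ext w
    simp [sub_eq_zero, eq_comm]
  show volume (Prod.mk v ⁻¹' {p : (ℝ × ℝ × ℝ) × (ℝ × ℝ × ℝ) | p.1.1 - p.2.1 = 0}) = 0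
  rw [this, Measure.volume_eq_prod, Measure.prod_prod]
  simp

/-- Removing the truncation in the scale at `z = 1/2`: the scale integral tends to `cpsi` for all
`t ≠ t'`, which excludes only a null set, and it stays bounded. -/
theorem trilin_tendsto (F G : ℝ × ℝ × ℝ → ℂ) (hF : Integrable F) (hG : Integrable G) (a b : ℝ)
    (ha : 0 < a) :
    Filter.Tendsto (fun n : ℕ => trilin (1 / 2) F G a b ((n : ℝ) + 1)⁻¹ (n + 1)) Filter.atTop
      (nhds (∫ p : (ℝ × ℝ × ℝ) × (ℝ × ℝ × ℝ), F p.1 * G p.2 * ((cpsi : ℂ) *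
        (oscInt (1 / 2) a b (p.1.1 - p.2.1) (p.1.2.1 - p.2.2.1) *
        oscInt (1 / 2) a b (p.1.1 - p.2.1) (p.1.2.2 - p.2.2.2))))) := by
  have e : ∀ n : ℕ, trilin (1 / 2) F G a b ((n : ℝ) + 1)⁻¹ (n + 1) =
      ∫ p : (ℝ × ℝ × ℝ) × (ℝ × ℝ × ℝ), F p.1 * G p.2 *
      (lamInt (1 / 2) ((n : ℝ) + 1)⁻¹ (n + 1) (p.1.1 - p.2.1) *
        (oscInt (1 / 2) a b (p.1.1 - p.2.1) (p.1.2.1 - p.2.2.1) *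
        oscInt (1 / 2) a b (p.1.1 - p.2.1) (p.1.2.2 - p.2.2.2))) := fun n =>
    trilin_eq_space _ F G a b _ _ hF hG ha (by positivity)
  simp_rw [e]
  set O := ∫ ξ in band a b, ‖freqPow (1 / 2) ξ‖
  have hO : 0 ≤ O := integral_nonneg fun _ => norm_nonneg _
  refine tendsto_integral_of_dominated_convergence
    (fun p => ‖F p.1 * G p.2‖ * (120 * Real.pi * (O * O))) (fun n => ?_)
    ((hF.mul_prod hG).norm.mul_const _) (fun n => Filter.Eventually.of_forall fun p => ?_) ?_
  · have h1 : Measurable fun τ : ℝ => lamInt (1 / 2) ((n : ℝ) + 1)⁻¹ (n + 1) τ := by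
      have : Measurable (Function.uncurry fun τ l : ℝ =>
          lamPow (1 / 2) l * ((psi (l * τ) : ℝ) : ℂ)) := by
        have h1 := measurable_lamPow (1 / 2)
        have h3 := continuous_psi.measurable
        unfold Function.uncurry; fun_prop
      exact (this.stronglyMeasurable.integral_prod_right).measurable
    have h2 : Measurable fun y : ℝ × ℝ => oscInt (1 / 2) a b y.1 y.2 := by
      have : Measurable (Function.uncurry fun (y : ℝ × ℝ) (ξ : ℝ) => freqPow (1 / 2) ξ *
          Complex.exp (Complex.I * ((y.1 * ξ ^ 3 + y.2 * ξ : ℝ) : ℂ))) := by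
        have h1 := measurable_freqPow (1 / 2)
        unfold Function.uncurry; fun_prop
      exact (this.stronglyMeasurable.integral_prod_right).measurable
    refine (hF.mul_prod hG).aestronglyMeasurable.mul (Measurable.aestronglyMeasurable ?_)
    refine (h1.comp (g := fun τ : ℝ => lamInt (1 / 2) ((n : ℝ) + 1)⁻¹ (n + 1) τ)
      (f := fun p : (ℝ × ℝ × ℝ) × (ℝ × ℝ × ℝ) => p.1.1 - p.2.1) (by fun_prop)).mul ?_
    exact (h2.comp (f := fun p : (ℝ × ℝ × ℝ) × (ℝ × ℝ × ℝ) =>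
      (p.1.1 - p.2.1, p.1.2.1 - p.2.2.1)) (by fun_prop)).mul
      (h2.comp (f := fun p : (ℝ × ℝ × ℝ) × (ℝ × ℝ × ℝ) =>
      (p.1.1 - p.2.1, p.1.2.2 - p.2.2.2)) (by fun_prop))
  · rw [norm_mul, norm_mul (lamInt _ _ _ _), norm_mul (oscInt _ _ _ _ _)]
    gcongr
    · exact lamInt_half_bound _ _ _ (by positivity)
    · exact oscInt_trivial _ _ _ _ _
    · exact oscInt_trivial _ _ _ _ _
  · filter_upwards [ae_time_ne] with p hp
    refine Filter.Tendsto.const_mul _ (Filter.Tendsto.mul_const _ ?_)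
    have e2 : ∀ n : ℕ, lamInt (1 / 2) ((n : ℝ) + 1)⁻¹ (n + 1) (p.1.1 - p.2.1) =
        ((∫ l in Set.Icc ((n : ℝ) + 1)⁻¹ (n + 1), psi (l * (p.1.1 - p.2.1)) / l : ℝ) : ℂ) :=
      fun n => lamInt_half _ _ _ (by positivity)
    simp_rw [e2]
    exact (Complex.continuous_ofReal.tendsto _).comp (kappa_tendsto _ hp)

/-- `|ξ|^{1/4} |η|^{1/4}` off the coordinate axes. -/
def halfWeight (ζ : ℝ × ℝ) : ℝ := Real.exp (Real.log |ζ.1| / 4) * Real.exp (Real.log |ζ.2| / 4)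

/-- The space-side bilinear form is a positive quadratic form on the Fourier side. -/
theorem limit_form_eq (F : ℝ × ℝ × ℝ → ℂ) (hF : Integrable F) (a b : ℝ) (ha : 0 < a) :
    ∫ p : (ℝ × ℝ × ℝ) × (ℝ × ℝ × ℝ), F p.1 * (starRingEnd ℂ) (F p.2) * ((cpsi : ℂ) *
        (oscInt (1 / 2) a b (p.1.1 - p.2.1) (p.1.2.1 - p.2.2.1) *
        oscInt (1 / 2) a b (p.1.1 - p.2.1) (p.1.2.2 - p.2.2.2))) =
    ((cpsi * ∫ ζ in band a b ×ˢ band a b, halfWeight ζ * ‖waveFT F ζ‖ ^ 2 : ℝ) : ℂ) := by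
  have hG : Integrable fun v => (starRingEnd ℂ) (F v) :=
    hF.norm.mono' (Complex.continuous_conj.comp_aestronglyMeasurable hF.aestronglyMeasurable)
      (Filter.Eventually.of_forall fun v => by rw [RCLike.norm_conj])
  set β := (volume.restrict (band a b)).prod (volume.restrict (band a b)) with hβ
  set K : (ℝ × ℝ × ℝ) × (ℝ × ℝ × ℝ) → ℝ × ℝ → ℂ := fun p ζ =>
    F p.1 * (starRingEnd ℂ) (F p.2) * (freqPow (1 / 2) ζ.1 * freqPow (1 / 2) ζ.2) *
      (wave p.1 ζ * (starRingEnd ℂ) (wave p.2 ζ)) with hK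
  have hKi : Integrable (Function.uncurry K) (volume.prod β) := by
    have h1 := (hF.mul_prod hG).mul_prod
      ((integrable_freqPow (1 / 2) a b ha).mul_prod (integrable_freqPow (1 / 2) a b ha))
    refine h1.mul_bdd (c := 1) (Measurable.aestronglyMeasurable ?_)
      (Filter.Eventually.of_forall fun x => ?_)
    · unfold wave
      fun_prop
    · rw [norm_mul, RCLike.norm_conj, norm_wave, norm_wave, mul_one]
  have e1 : ∀ p : (ℝ × ℝ × ℝ) × (ℝ × ℝ × ℝ), F p.1 * (starRingEnd ℂ) (F p.2) * ((cpsi : ℂ) *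
        (oscInt (1 / 2) a b (p.1.1 - p.2.1) (p.1.2.1 - p.2.2.1) *
        oscInt (1 / 2) a b (p.1.1 - p.2.1) (p.1.2.2 - p.2.2.2))) = (cpsi : ℂ) * ∫ ζ, K p ζ ∂β := by
    intro p
    simp only [oscInt]
    rw [← integral_prod_mul, ← integral_const_mul, ← integral_const_mul, ← integral_const_mul]
    refine integral_congr_ae (Filter.Eventually.of_forall fun q => ?_)
    simp only [hK, wave, conj_expI]
    have : ∀ r s : ℝ, Complex.exp (Complex.I * (r : ℂ)) * Complex.exp (Complex.I * (s : ℂ)) =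
        Complex.exp (Complex.I * ((r + s : ℝ) : ℂ)) := fun r s => by
      rw [← Complex.exp_add]; push_cast; ring_nf
    rw [this]
    have e2 : p.1.1 * (q.1 ^ 3 + q.2 ^ 3) + p.1.2.1 * q.1 + p.1.2.2 * q.2 +
        -(p.2.1 * (q.1 ^ 3 + q.2 ^ 3) + p.2.2.1 * q.1 + p.2.2.2 * q.2) =
        ((p.1.1 - p.2.1) * q.1 ^ 3 + (p.1.2.1 - p.2.2.1) * q.1) +
        ((p.1.1 - p.2.1) * q.2 ^ 3 + (p.1.2.2 - p.2.2.2) * q.2) := by ring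
    rw [e2, ← this ((p.1.1 - p.2.1) * q.1 ^ 3 + (p.1.2.1 - p.2.2.1) * q.1)
      ((p.1.1 - p.2.1) * q.2 ^ 3 + (p.1.2.2 - p.2.2.2) * q.2)]
    ring
  simp_rw [e1]
  rw [integral_const_mul, integral_integral_swap hKi, Complex.ofReal_mul, ← integral_complex_ofReal,
    Measure.volume_eq_prod ℝ, ← Measure.prod_restrict]
  congr 1
  refine integral_congr_ae (Filter.Eventually.of_forall fun ζ => ?_)
  simp only [hK, halfWeight]
  have e3 : ∀ x : ℝ, freqPow (1 / 2) x = ((Real.exp (Real.log |x| / 4) : ℝ) : ℂ) := fun x => by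
    rw [freqPow, Complex.ofReal_exp]; congr 1; push_cast; ring
  rw [e3, e3]
  push_cast
  rw [← Complex.mul_conj', waveFT, ← integral_conj, ← integral_prod_mul, ← integral_const_mul,
    Measure.volume_eq_prod (ℝ × ℝ × ℝ)]
  refine integral_congr_ae (Filter.Eventually.of_forall fun p => ?_)
  simp only [map_mul]
  ring

/-- The constant of the weighted restriction inequality. -/
def weightConst : ℝ := interpConst / |cpsi|

/-- The weighted restriction inequality, with a constant independent of the frequency band. -/
theorem weighted_band (f : ℝ × ℝ × ℝ → ℂ) (ell : ℝ × ℝ × ℝ → ℝ) (M E a b : ℝ)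
    (hf : Integrable f) (hfm : Measurable f) (hl : Measurable ell) (hM : ∀ v, |ell v| ≤ M)
    (hE : 0 ≤ E) (h0 : ∫⁻ v, ‖f v‖ₑ ^ 2 ≤ ENNReal.ofReal E)
    (h1 : ∫ v, ‖f v‖ * Real.exp (ell v) ≤ E) (ha : 0 < a) (hab : a ≤ b) :
    ∫ ζ in band a b ×ˢ band a b, halfWeight ζ * ‖waveFT (expTwist f ell (1 / 2)) ζ‖ ^ 2 ≤
      weightConst * (√E * E) := by
  set F := expTwist f ell (1 / 2) with hF
  have hFi : Integrable F := integrable_expTwist hf hl hM _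
  have hGF : expTwist (fun v => (starRingEnd ℂ) (f v)) ell (1 / 2) =
      fun v => (starRingEnd ℂ) (F v) := by
    funext v
    simp only [hF, expTwist, map_mul]
    congr 1
    rw [← Complex.exp_conj, map_mul, Complex.conj_ofReal,
      show (1 / 2 : ℂ) = ((1 / 2 : ℝ) : ℂ) by push_cast; ring, Complex.conj_ofReal]
  have hG : Integrable fun v => (starRingEnd ℂ) (F v) :=
    hFi.norm.mono' (Complex.continuous_conj.comp_aestronglyMeasurable hFi.aestronglyMeasurable)
      (Filter.Eventually.of_forall fun v => by rw [RCLike.norm_conj])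
  have hT := trilin_tendsto F _ hFi hG a b ha
  rw [limit_form_eq F hFi a b ha] at hT
  have hb := le_of_tendsto hT.norm (Filter.Eventually.of_forall fun n => by
    have := interp_bound f ell M E a b ((n : ℝ) + 1)⁻¹ (n + 1) hf hfm hl hM hE h0 h1 ha hab
      (by positivity)
    rwa [hGF] at this)
  have hc : 0 < |cpsi| := abs_pos.2 cpsi_neg.ne
  rw [Complex.norm_real, norm_mul, Real.norm_eq_abs] at hb
  rw [weightConst, div_mul_eq_mul_div, le_div_iff₀ hc, mul_comm]
  refine le_trans (mul_le_mul_of_nonneg_left (le_abs_self _) hc.le) hb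

/-! ### The full weighted inequality and duality -/

theorem lintegral_le_of_exhaust {α : Type*} [MeasurableSpace α] {μ : Measure α} (g : α → ℝ≥0∞)
    (s : ℕ → Set α) (hs : Monotone s) (hm : ∀ n, MeasurableSet (s n))
    (h : ∀ x, g x ≠ 0 → ∃ n, x ∈ s n) (B : ℝ≥0∞) (hB : ∀ n, ∫⁻ x in s n, g x ∂μ ≤ B) :
    ∫⁻ x, g x ∂μ ≤ B := by
  have e : ∫⁻ x, g x ∂μ = ∫⁻ x in ⋃ n, s n, g x ∂μ := by
    rw [← lintegral_indicator (MeasurableSet.iUnion hm)]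
    refine lintegral_congr fun x => ?_
    by_cases hx : g x = 0
    · rw [hx, Set.indicator_apply_eq_zero.2 fun _ => hx]
    · rw [Set.indicator_of_mem (Set.mem_iUnion.2 (h x hx))]
  rw [e, setLIntegral_iUnion_of_directed _ hs.directed_le]
  exact iSup_le hB

/-- The symbol `|ξ|^{1/8} |η|^{1/8}`. -/
def wt (ζ : ℝ × ℝ) : ℝ := |ζ.1| ^ ((1 : ℝ) / 8) * |ζ.2| ^ ((1 : ℝ) / 8)

theorem measurable_wt : Measurable wt := by unfold wt; fun_prop

theorem wt_nonneg (ζ : ℝ × ℝ) : 0 ≤ wt ζ := by unfold wt; positivity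

theorem wt_sq (ζ : ℝ × ℝ) (h1 : ζ.1 ≠ 0) (h2 : ζ.2 ≠ 0) : wt ζ ^ 2 = halfWeight ζ := by
  have e : ∀ x : ℝ, x ≠ 0 → (|x| ^ ((1 : ℝ) / 8)) ^ 2 = Real.exp (Real.log |x| / 4) := fun x hx => by
    rw [← Real.rpow_natCast, ← Real.rpow_mul (abs_nonneg x), Real.rpow_def_of_pos (abs_pos.2 hx)]
    congr 1; push_cast; ring
  rw [wt, mul_pow, e _ h1, e _ h2, halfWeight]

theorem norm_waveFT_le (F : ℝ × ℝ × ℝ → ℂ) (ζ : ℝ × ℝ) : ‖waveFT F ζ‖ ≤ ∫ v, ‖F v‖ := by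
  refine (norm_integral_le_integral_norm _).trans (le_of_eq ?_)
  simp [norm_wave]

/-- Monotone convergence along the bands `1/(n+1) ≤ |ξ|, |η| ≤ n+1`, which exhaust the complement of
the coordinate axes; `wt` vanishes on the axes. -/
theorem weighted_full (f : ℝ × ℝ × ℝ → ℂ) (ell : ℝ × ℝ × ℝ → ℝ) (M E : ℝ)
    (hf : Integrable f) (hfm : Measurable f) (hl : Measurable ell) (hM : ∀ v, |ell v| ≤ M)
    (hE : 0 ≤ E) (h0 : ∫⁻ v, ‖f v‖ₑ ^ 2 ≤ ENNReal.ofReal E)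
    (h1 : ∫ v, ‖f v‖ * Real.exp (ell v) ≤ E) :
    ∫⁻ ζ, ‖(wt ζ : ℂ) * waveFT (expTwist f ell (1 / 2)) ζ‖ₑ ^ 2 ≤
      ENNReal.ofReal (weightConst * (√E * E)) := by
  set F := expTwist f ell (1 / 2) with hF
  have hFm : Measurable F := measurable_expTwist hfm hl _
  have hq : ∀ m : ℕ, (0 : ℝ) < ((m : ℝ) + 1)⁻¹ := fun m => by positivity
  have hmem : ∀ (x : ℝ) (m : ℕ), ((m : ℝ) + 1)⁻¹ ≤ |x| → |x| ≤ m + 1 →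
      x ∈ band ((m : ℝ) + 1)⁻¹ (m + 1) := fun x m h h' => by
    rcases le_total 0 x with hx | hx
    · rw [abs_of_nonneg hx] at h h'; exact Or.inr ⟨h, h'⟩
    · rw [abs_of_nonpos hx] at h h'; exact Or.inl ⟨by linarith, by linarith⟩
  have hmono : ∀ m n : ℕ, m ≤ n → band ((m : ℝ) + 1)⁻¹ (m + 1) ⊆ band ((n : ℝ) + 1)⁻¹ (n + 1) := by
    intro m n hmn x hx
    obtain ⟨h, h'⟩ := band_abs (hq m).le hx
    have hc : (m : ℝ) + 1 ≤ n + 1 := by exact_mod_cast Nat.succ_le_succ hmn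
    exact hmem x n ((inv_anti₀ (by positivity) hc).trans h) (h'.trans hc)
  refine lintegral_le_of_exhaust _
    (fun m : ℕ => band ((m : ℝ) + 1)⁻¹ (m + 1) ×ˢ band ((m : ℝ) + 1)⁻¹ (m + 1))
    (fun m n hmn => Set.prod_mono (hmono m n hmn) (hmono m n hmn))
    (fun m => (measurableSet_band _ _).prod (measurableSet_band _ _)) ?_ _ ?_
  · intro ζ hζ
    have hw : wt ζ ≠ 0 := by
      rintro h; simp [h] at hζ
    have hx : ∀ x : ℝ, x ≠ 0 → ∃ m : ℕ, x ∈ band ((m : ℝ) + 1)⁻¹ (m + 1) := fun x hx => by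
      obtain ⟨m, hm⟩ := exists_nat_ge (|x| + |x|⁻¹)
      have hp := abs_pos.2 hx
      have hp' := inv_pos.2 hp
      refine ⟨m, hmem x m (inv_le_of_inv_le₀ hp (by linarith)) (by linarith)⟩
    have h1 : ζ.1 ≠ 0 := fun h => hw (by simp [wt, h])
    have h2 : ζ.2 ≠ 0 := fun h => hw (by simp [wt, h])
    obtain ⟨m, hm⟩ := hx _ h1
    obtain ⟨n, hn⟩ := hx _ h2
    exact ⟨max m n, hmono _ _ (le_max_left _ _) hm, hmono _ _ (le_max_right _ _) hn⟩
  · intro m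
    have hb := weighted_band f ell M E ((m : ℝ) + 1)⁻¹ (m + 1) hf hfm hl hM hE h0 h1 (hq m) (by
      have : (1 : ℝ) ≤ m + 1 := by linarith [(Nat.cast_nonneg m : (0 : ℝ) ≤ m)]
      exact (inv_le_one_of_one_le₀ this).trans this)
    refine le_trans (le_of_eq ?_) (ENNReal.ofReal_le_ofReal hb)
    have hms : MeasurableSet (band ((m : ℝ) + 1)⁻¹ (m + 1) ×ˢ band ((m : ℝ) + 1)⁻¹ (m + 1)) :=
      (measurableSet_band _ _).prod (measurableSet_band _ _)
    have hfin : volume (band ((m : ℝ) + 1)⁻¹ (m + 1) ×ˢ band ((m : ℝ) + 1)⁻¹ (m + 1)) < ⊤ := by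
      rw [Measure.volume_eq_prod, Measure.prod_prod]
      exact ENNReal.mul_lt_top (volume_band_lt_top _ _) (volume_band_lt_top _ _)
    have hhm : Measurable halfWeight := by unfold halfWeight; fun_prop
    have hhn : ∀ ζ, 0 ≤ halfWeight ζ := fun ζ => by unfold halfWeight; positivity
    rw [ofReal_integral_eq_lintegral_ofReal]
    · refine setLIntegral_congr_fun hms fun ζ hζ => ?_
      have hne : ∀ x : ℝ, x ∈ band ((m : ℝ) + 1)⁻¹ (m + 1) → x ≠ 0 := fun x hx =>
        abs_pos.1 ((hq m).trans_le (band_abs (hq m).le hx).1)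
      rw [← wt_sq ζ (hne _ hζ.1) (hne _ hζ.2), ← mul_pow, ENNReal.ofReal_pow
        (mul_nonneg (wt_nonneg _) (norm_nonneg _)), ← ofReal_norm, norm_mul,
        Complex.norm_real, Real.norm_of_nonneg (wt_nonneg _)]
    · refine Integrable.mono' (g := fun _ => (Real.exp (Real.log (m + 1) / 4) *
        Real.exp (Real.log (m + 1) / 4)) * (∫ v, ‖F v‖) ^ 2) (integrableOn_const hfin.ne)
        (Measurable.aestronglyMeasurable ?_) ?_
      · have := measurable_waveFT F hFm
        fun_prop
      · filter_upwards [ae_restrict_mem hms] with ζ hζ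
        rw [Real.norm_of_nonneg (mul_nonneg (hhn _) (by positivity))]
        have hle : ∀ x : ℝ, x ∈ band ((m : ℝ) + 1)⁻¹ (m + 1) →
            Real.exp (Real.log |x| / 4) ≤ Real.exp (Real.log (m + 1) / 4) := fun x hx => by
          obtain ⟨h, h'⟩ := band_abs (hq m).le hx
          have := Real.log_le_log ((hq m).trans_le h) h'
          gcongr
        have := hle _ hζ.1
        have := hle _ hζ.2
        have := norm_waveFT_le F ζ
        unfold halfWeight
        gcongr
    · exact Filter.Eventually.of_forall fun ζ => mul_nonneg (hhn _) (by positivity)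

/-- The `TT*`-type duality argument on a set `S` of finite measure on which `|U|` is bounded below, so
that all the integrals involved are finite. -/
theorem dual_bound (g : ℝ × ℝ → ℂ) (hgm : Measurable g)
    (hg : Integrable fun ζ => (wt ζ : ℂ) * g ζ) (hG : ∫⁻ ζ, ‖g ζ‖ₑ ^ 2 ≠ ⊤)
    (U : ℝ × ℝ × ℝ → ℂ) (hUm : Measurable U)
    (hU : ∀ v, U v = ∫ ζ, wave v ζ * ((wt ζ : ℂ) * g ζ))
    (S : Set (ℝ × ℝ × ℝ)) (hS : MeasurableSet S) (hSf : volume S < ⊤) (ε N : ℝ) (hε : 0 < ε)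
    (hlo : ∀ v ∈ S, ε ≤ ‖U v‖) (hN : ∀ v, ‖U v‖ ≤ N) :
    ∫⁻ v in S, ‖U v‖ₑ ^ 4 ≤ ENNReal.ofReal (((∫⁻ ζ, ‖g ζ‖ₑ ^ 2).toReal * weightConst) ^ 2) := by
  set γ := (∫⁻ ζ, ‖g ζ‖ₑ ^ 2).toReal with hγ
  have hN0 : 0 ≤ N := (norm_nonneg _).trans (hN 0)
  -- chosen so that on `S`: `|f|² = |f| exp ell = |U|⁴` and `f exp (ell / 2) = conj U · |U|²`
  set f : ℝ × ℝ × ℝ → ℂ := S.indicator fun v => (starRingEnd ℂ) (U v) * (‖U v‖ : ℂ) with hf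
  set ell : ℝ × ℝ × ℝ → ℝ := S.indicator fun v => 2 * Real.log ‖U v‖ with hell
  set E := ∫ v in S, ‖U v‖ ^ 4 with hEdef
  have hE : 0 ≤ E := integral_nonneg fun _ => by positivity
  have hfm : Measurable f := by
    refine Measurable.indicator ?_ hS
    have := Complex.continuous_conj.measurable.comp hUm
    exact this.mul (Complex.measurable_ofReal.comp hUm.norm)
  have hlm : Measurable ell := by
    refine Measurable.indicator ?_ hS
    fun_prop
  have hconst : ∀ c : ℝ, Integrable (S.indicator fun _ => c) := fun c =>
    (integrable_indicator_iff hS).2 (integrableOn_const hSf.ne)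
  have hfn : ∀ v, ‖f v‖ = S.indicator (fun v => ‖U v‖ ^ 2) v := fun v => by
    by_cases hv : v ∈ S
    · simp only [hf, Set.indicator_of_mem hv]
      rw [norm_mul, RCLike.norm_conj, Complex.norm_real, norm_norm, sq]
    · simp [hf, Set.indicator_of_notMem hv]
  have hfi : Integrable f := by
    refine (hconst (N ^ 2)).mono' hfm.aestronglyMeasurable (Filter.Eventually.of_forall fun v => ?_)
    rw [hfn]
    refine Set.indicator_le_indicator ?_
    have := hN v
    gcongr
  have hlM : ∀ v, |ell v| ≤ 2 * (|Real.log ε| + |Real.log N|) := fun v => by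
    by_cases hv : v ∈ S
    · simp only [hell, Set.indicator_of_mem hv]
      have h1 := Real.log_le_log hε (hlo v hv)
      have h2 := Real.log_le_log (hε.trans_le (hlo v hv)) (hN v)
      have := neg_abs_le (Real.log ε)
      have := le_abs_self (Real.log N)
      have := abs_nonneg (Real.log ε)
      have := abs_nonneg (Real.log N)
      rw [abs_le]; constructor <;> linarith
    · simp only [hell, Set.indicator_of_notMem hv, abs_zero]
      positivity
  have h4 : IntegrableOn (fun v => ‖U v‖ ^ 4) S := by
    refine Integrable.mono' (g := fun _ => N ^ 4) (integrableOn_const hSf.ne)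
      (by fun_prop) (Filter.Eventually.of_forall fun v => ?_)
    have := hN v
    rw [Real.norm_of_nonneg (by positivity)]
    gcongr
  have hEl : ∫⁻ v in S, ‖U v‖ₑ ^ 4 = ENNReal.ofReal E := by
    rw [hEdef, ofReal_integral_eq_lintegral_ofReal h4
      (Filter.Eventually.of_forall fun v => by positivity)]
    refine lintegral_congr fun v => ?_
    rw [ENNReal.ofReal_pow (norm_nonneg _), ofReal_norm]
  have h0 : ∫⁻ v, ‖f v‖ₑ ^ 2 ≤ ENNReal.ofReal E := by
    rw [← hEl, ← lintegral_indicator hS]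
    refine le_of_eq (lintegral_congr fun v => ?_)
    rw [← ofReal_norm, hfn]
    by_cases hv : v ∈ S
    · simp only [Set.indicator_of_mem hv]
      rw [ENNReal.ofReal_pow (norm_nonneg _), ofReal_norm, ← pow_mul]
    · simp [Set.indicator_of_notMem hv]
  have h1 : ∫ v, ‖f v‖ * Real.exp (ell v) ≤ E := by
    rw [hEdef, ← integral_indicator hS]
    refine le_of_eq (integral_congr_ae (Filter.Eventually.of_forall fun v => ?_))
    simp only [hfn]
    by_cases hv : v ∈ S
    · simp only [hell, Set.indicator_of_mem hv]
      have hp := hε.trans_le (hlo v hv)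
      rw [two_mul, Real.exp_add, Real.exp_log hp]; ring
    · simp [Set.indicator_of_notMem hv]
  have hW := weighted_full f ell _ E hfi hfm hlm hlM hE h0 h1
  set F := expTwist f ell (1 / 2) with hF
  have hFi : Integrable F := integrable_expTwist hfi hlm hlM _
  have hFm : Measurable F := measurable_expTwist hfm hlm _
  have hUF : ∀ v, U v * F v = ((S.indicator (fun v => ‖U v‖ ^ 4) v : ℝ) : ℂ) := fun v => by
    by_cases hv : v ∈ S
    · simp only [hF, expTwist, hf, hell, Set.indicator_of_mem hv]
      have hp := hε.trans_le (hlo v hv)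
      rw [show (1 / 2 : ℂ) * ((2 * Real.log ‖U v‖ : ℝ) : ℂ) = ((Real.log ‖U v‖ : ℝ) : ℂ) by
        push_cast; ring, ← Complex.ofReal_exp, Real.exp_log hp, ← mul_assoc, ← mul_assoc,
        Complex.mul_conj']
      push_cast; ring
    · simp [hF, expTwist, hf, Set.indicator_of_notMem hv]
  have hEU : (E : ℂ) = ∫ ζ, g ζ * ((wt ζ : ℂ) * waveFT F ζ) := by
    have a1 : (E : ℂ) = ∫ v, U v * F v := by
      simp_rw [hUF]
      rw [integral_complex_ofReal, integral_indicator hS]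
    have hi : Integrable (Function.uncurry fun (v : ℝ × ℝ × ℝ) (ζ : ℝ × ℝ) =>
        F v * ((wt ζ : ℂ) * g ζ) * wave v ζ) (volume.prod volume) := by
      refine (hFi.mul_prod hg).mul_bdd (c := 1) (Measurable.aestronglyMeasurable ?_)
        (Filter.Eventually.of_forall fun x => ?_)
      · unfold wave; fun_prop
      · rw [norm_wave]
    have a2 : ∫ v, U v * F v = ∫ v, ∫ ζ, F v * ((wt ζ : ℂ) * g ζ) * wave v ζ := by
      refine integral_congr_ae (Filter.Eventually.of_forall fun v => ?_)
      simp only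
      rw [hU, mul_comm, ← integral_const_mul]
      refine integral_congr_ae (Filter.Eventually.of_forall fun ζ => ?_)
      simp only
      ring
    rw [a1, a2, integral_integral_swap hi]
    refine integral_congr_ae (Filter.Eventually.of_forall fun ζ => ?_)
    simp only [waveFT]
    rw [← integral_const_mul, ← integral_const_mul]
    refine integral_congr_ae (Filter.Eventually.of_forall fun v => ?_)
    simp only
    ring
  have hCS : ENNReal.ofReal E ^ 2 ≤ (∫⁻ ζ, ‖g ζ‖ₑ ^ 2) *
      ENNReal.ofReal (weightConst * (√E * E)) := by
    have b1 : ENNReal.ofReal E ≤ ∫⁻ ζ, ‖g ζ‖ₑ * ‖(wt ζ : ℂ) * waveFT F ζ‖ₑ := by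
      have : ENNReal.ofReal E = ‖(E : ℂ)‖ₑ := by
        rw [← ofReal_norm, Complex.norm_real, Real.norm_of_nonneg hE]
      rw [this, hEU]
      refine (enorm_integral_le_lintegral_enorm _).trans (le_of_eq ?_)
      simp_rw [enorm_mul]
    have b2 := ENNReal.lintegral_mul_le_Lp_mul_Lq (volume : Measure (ℝ × ℝ))
      Real.HolderConjugate.two_two (f := fun ζ => ‖g ζ‖ₑ)
      (g := fun ζ => ‖(wt ζ : ℂ) * waveFT F ζ‖ₑ) hgm.enorm.aemeasurable
      (Measurable.aemeasurable (by
        have := measurable_waveFT F hFm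
        have := measurable_wt
        fun_prop))
    have b3 := pow_le_pow_left' (b1.trans b2) 2
    refine b3.trans ?_
    rw [mul_pow]
    have : ∀ x : ℝ≥0∞, (x ^ ((1 : ℝ) / 2)) ^ 2 = x := fun x => by
      rw [← ENNReal.rpow_natCast, ← ENNReal.rpow_mul]; norm_num
    rw [this, this]
    simp only [ENNReal.rpow_two]
    gcongr
  rw [hEl]
  refine ENNReal.ofReal_le_ofReal ?_
  rcases hE.eq_or_lt with h | hpos
  · rw [← h]; positivity
  have hs : 0 < √E := Real.sqrt_pos.2 hpos
  have hss : √E * √E = E := Real.mul_self_sqrt hE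
  rw [← ENNReal.ofReal_toReal hG, ← hγ, ← ENNReal.ofReal_mul ENNReal.toReal_nonneg,
    ← ENNReal.ofReal_pow hE] at hCS
  have hr : E ^ 2 ≤ γ * (weightConst * (√E * E)) := by
    by_contra hcon
    push Not at hcon
    exact absurd hCS (not_le.2 ((ENNReal.ofReal_lt_ofReal_iff (by positivity)).2 hcon))
  have hr2 : √E ≤ γ * weightConst := by
    have hp : 0 < √E * E := by positivity
    refine le_of_mul_le_mul_right ?_ hp
    calc √E * (√E * E) = E ^ 2 := by rw [← mul_assoc, hss, sq]
      _ ≤ _ := by linarith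
  calc E = √E ^ 2 := by rw [sq, hss]
    _ ≤ _ := by gcongr

/-- The `L⁴` estimate on all of space-time, exhausting `{U ≠ 0}` by bounded level sets. -/
theorem dual_full (g : ℝ × ℝ → ℂ) (hgm : Measurable g)
    (hg : Integrable fun ζ => (wt ζ : ℂ) * g ζ) (hG : ∫⁻ ζ, ‖g ζ‖ₑ ^ 2 ≠ ⊤)
    (U : ℝ × ℝ × ℝ → ℂ)
    (hU : ∀ v, U v = ∫ ζ, wave v ζ * ((wt ζ : ℂ) * g ζ)) :
    ∫⁻ v, ‖U v‖ₑ ^ 4 ≤ ENNReal.ofReal (((∫⁻ ζ, ‖g ζ‖ₑ ^ 2).toReal * weightConst) ^ 2) := by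
  have hUm : Measurable U := by
    have e : U = fun v => ∫ ζ, wave v ζ * ((wt ζ : ℂ) * g ζ) := funext hU
    have : Measurable (Function.uncurry fun (v : ℝ × ℝ × ℝ) (ζ : ℝ × ℝ) =>
        wave v ζ * ((wt ζ : ℂ) * g ζ)) := by
      have := measurable_wt
      unfold wave Function.uncurry; fun_prop
    rw [e]
    exact (this.stronglyMeasurable.integral_prod_right).measurable
  have hN : ∀ v, ‖U v‖ ≤ ∫ ζ, ‖(wt ζ : ℂ) * g ζ‖ := fun v => by
    rw [hU]
    refine (norm_integral_le_integral_norm _).trans (le_of_eq ?_)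
    refine integral_congr_ae (Filter.Eventually.of_forall fun ζ => ?_)
    simp only
    rw [norm_mul (wave v ζ), norm_wave, one_mul]
  refine lintegral_le_of_exhaust _
    (fun n : ℕ => Metric.closedBall 0 n ∩ {v | ((n : ℝ) + 1)⁻¹ ≤ ‖U v‖}) ?_ ?_ ?_ _ ?_
  · intro m n hmn
    have hc : (m : ℝ) ≤ n := by exact_mod_cast hmn
    refine Set.inter_subset_inter (Metric.closedBall_subset_closedBall hc) fun v hv => ?_
    have hi : ((n : ℝ) + 1)⁻¹ ≤ ((m : ℝ) + 1)⁻¹ := inv_anti₀ (by positivity) (by linarith)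
    exact hi.trans hv
  · exact fun n => Metric.isClosed_closedBall.measurableSet.inter
      (measurableSet_le measurable_const hUm.norm)
  · intro v hv
    have hp : 0 < ‖U v‖ := by
      rw [norm_pos_iff]; rintro h; simp [h] at hv
    obtain ⟨n, hn⟩ := exists_nat_ge (‖v‖ + ‖U v‖⁻¹)
    have hp' := inv_pos.2 hp
    have := norm_nonneg v
    refine ⟨n, ?_, ?_⟩
    · rw [mem_closedBall_zero_iff]; linarith
    · exact inv_le_of_inv_le₀ hp (by linarith)
  · intro n
    refine dual_bound g hgm hg hG U hUm hU _ (Metric.isClosed_closedBall.measurableSet.inter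
      (measurableSet_le measurable_const hUm.norm)) ?_ ((n : ℝ) + 1)⁻¹ _ (by positivity)
      (fun v hv => hv.2) hN
    exact (measure_mono Set.inter_subset_left).trans_lt measure_closedBall_lt_top

/-! ### Schwartz data and the conclusion -/

open scoped FourierTransform SchwartzMap in
/-- The Fourier transform of a Schwartz function on `ℝ × ℝ`, in the normalization of `fxy2`, is a
Schwartz function. The proof transports Mathlib's Fourier transform from `WithLp 2 (ℝ × ℝ)`. -/
theorem exists_schwartz_fxy2 (u₀ : SchwartzMap (ℝ × ℝ) ℂ) :
    ∃ g : SchwartzMap (ℝ × ℝ) ℂ, ∀ ζ : ℝ × ℝ, g ζ =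
      ∫ z : ℝ × ℝ, Complex.exp (-Complex.I * ((z.1 * ζ.1 + z.2 * ζ.2 : ℝ) : ℂ)) * u₀ z := by
  set e := WithLp.prodContinuousLinearEquiv 2 ℝ ℝ ℝ with he
  set φ : SchwartzMap (WithLp 2 (ℝ × ℝ)) ℂ := SchwartzMap.compCLMOfContinuousLinearEquiv ℂ e u₀
    with hφ
  have h2 : (2 * Real.pi)⁻¹ ≠ 0 := by positivity
  -- Mathlib's transform has phase `-2π⟨v, w⟩`, hence the dilation of the frequency by `(2π)⁻¹`
  set s : (ℝ × ℝ) ≃L[ℝ] (ℝ × ℝ) := ContinuousLinearEquiv.smulLeft (Units.mk0 _ h2) with hs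
  refine ⟨SchwartzMap.compCLMOfContinuousLinearEquiv ℂ (s.trans e.symm) (𝓕 φ), fun ζ => ?_⟩
  rw [SchwartzMap.compCLMOfContinuousLinearEquiv_apply, Function.comp_apply, SchwartzMap.fourier_coe,
    Real.fourier_eq']
  have hmp : MeasurePreserving e := WithLp.volume_preserving_ofLp ℝ ℝ
  have hemb : MeasurableEmbedding e := e.toHomeomorph.measurableEmbedding
  rw [← hmp.integral_comp hemb]
  refine integral_congr_ae (Filter.Eventually.of_forall fun v => ?_)
  have hv : φ v = u₀ (e v) := rfl
  have hin : inner ℝ v ((s.trans e.symm) ζ) =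
      (2 * Real.pi)⁻¹ * ((e v).1 * ζ.1 + (e v).2 * ζ.2) := by
    rw [WithLp.prod_inner_apply]
    have a1 : ((s.trans e.symm) ζ).fst = (2 * Real.pi)⁻¹ * ζ.1 := rfl
    have a2 : ((s.trans e.symm) ζ).snd = (2 * Real.pi)⁻¹ * ζ.2 := rfl
    have a3 : v.fst = (e v).1 := rfl
    have a4 : v.snd = (e v).2 := rfl
    change inner ℝ v.fst ((s.trans e.symm) ζ).fst + inner ℝ v.snd ((s.trans e.symm) ζ).snd = _
    rw [a1, a2, a3, a4]
    simp only [RCLike.inner_apply, conj_trivial]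
    ring
  simp only [hv, hin, smul_eq_mul]
  congr 2
  have hpi : (Real.pi : ℂ) ≠ 0 := by exact_mod_cast Real.pi_ne_zero
  push_cast
  field_simp

theorem wt_le (ζ : ℝ × ℝ) : wt ζ ≤ 1 + ‖ζ‖ := by
  have h : ∀ x : ℝ, |x| ≤ ‖ζ‖ → |x| ^ ((1 : ℝ) / 8) ≤ (1 + ‖ζ‖) ^ ((1 : ℝ) / 8) := fun x hx =>
    Real.rpow_le_rpow (abs_nonneg _) (by linarith) (by norm_num)
  have h1 := h ζ.1 (norm_fst_le ζ)
  have h2 := h ζ.2 (norm_snd_le ζ)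
  have hp : 1 ≤ 1 + ‖ζ‖ := by linarith [norm_nonneg ζ]
  calc wt ζ ≤ (1 + ‖ζ‖) ^ ((1 : ℝ) / 8) * (1 + ‖ζ‖) ^ ((1 : ℝ) / 8) := by unfold wt; gcongr
    _ = (1 + ‖ζ‖) ^ ((1 : ℝ) / 4) := by rw [← Real.rpow_add (by linarith)]; norm_num
    _ ≤ (1 + ‖ζ‖) ^ (1 : ℝ) := Real.rpow_le_rpow_of_exponent_le hp (by norm_num)
    _ = _ := Real.rpow_one _

theorem integrable_wt_mul (g : SchwartzMap (ℝ × ℝ) ℂ) :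
    Integrable fun ζ : ℝ × ℝ => (wt ζ : ℂ) * g ζ := by
  have h0 := g.integrable_pow_mul volume 0
  have h1 := g.integrable_pow_mul volume 1
  refine (h0.add h1).mono' (Measurable.aestronglyMeasurable ?_)
    (Filter.Eventually.of_forall fun ζ => ?_)
  · have := measurable_wt
    have := g.continuous.measurable
    fun_prop
  · rw [norm_mul, Complex.norm_real, Real.norm_of_nonneg (wt_nonneg _)]
    simp only [Pi.add_apply, pow_zero, pow_one]
    rw [← add_mul]
    gcongr
    exact wt_le ζ

theorem fxy2_eq (u₀ : SchwartzMap (ℝ × ℝ) ℂ) (ζ : ℝ × ℝ) :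
    fxy2 (fun x y => u₀ (x, y)) ζ.1 ζ.2 =
      ∫ z : ℝ × ℝ, Complex.exp (-Complex.I * ((z.1 * ζ.1 + z.2 * ζ.2 : ℝ) : ℂ)) * u₀ z := by
  rw [Measure.volume_eq_prod, integral_prod]
  · rfl
  · refine (u₀.integrable (μ := volume)).bdd_mul (c := 1) (Measurable.aestronglyMeasurable
      (by fun_prop)) (Filter.Eventually.of_forall fun z => ?_)
    have := norm_expI (-(z.1 * ζ.1 + z.2 * ζ.2))
    rw [← this]
    refine le_of_eq ?_
    congr 2; push_cast; ring

/-- The inequality half of Plancherel's theorem, with the constant `(2π)²` of the normalization of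
`fxy2`. -/
theorem fxy2_plancherel (u₀ : SchwartzMap (ℝ × ℝ) ℂ) :
    ∫⁻ ζ : ℝ × ℝ, ‖fxy2 (fun x y => u₀ (x, y)) ζ.1 ζ.2‖ₑ ^ 2 ≤
      ENNReal.ofReal (2 * Real.pi) * ENNReal.ofReal (2 * Real.pi) * ∫⁻ z, ‖u₀ z‖ₑ ^ 2 := by
  have hi : Integrable fun z => (starRingEnd ℂ) (u₀ z) :=
    (u₀.integrable (μ := volume)).norm.mono'
      (Complex.continuous_conj.comp u₀.continuous).aestronglyMeasurable
      (Filter.Eventually.of_forall fun v => by rw [RCLike.norm_conj])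
  have h := bessel2 (fun z => (starRingEnd ℂ) (u₀ z))
    (Complex.continuous_conj.comp u₀.continuous).measurable hi
  simp_rw [← ofReal_norm, RCLike.norm_conj] at h
  simp_rw [← ofReal_norm]
  refine le_trans (le_of_eq (lintegral_congr fun ζ => ?_)) h
  rw [fxy2_eq, ← RCLike.norm_conj, ← integral_conj]
  refine congrArg (fun c : ℂ => ENNReal.ofReal ‖c‖ ^ 2) ?_
  refine integral_congr_ae (Filter.Eventually.of_forall fun z => ?_)
  simp only [map_mul, expK2, expK]
  congr 1
  rw [← Complex.exp_conj, ← Complex.exp_add]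
  congr 1
  simp only [map_mul, map_neg, Complex.conj_I, Complex.conj_ofReal]
  push_cast; ring

theorem DxDyU_eq (u₀ g : SchwartzMap (ℝ × ℝ) ℂ)
    (hg : ∀ ζ : ℝ × ℝ, g ζ = fxy2 (fun x y => u₀ (x, y)) ζ.1 ζ.2) (v : ℝ × ℝ × ℝ) :
    DxDyU (fun x y => u₀ (x, y)) v.1 v.2.1 v.2.2 =
      ∫ ζ, wave v ζ * ((wt ζ : ℂ) * g ζ) := by
  rw [Measure.volume_eq_prod, integral_prod]
  · unfold DxDyU
    refine integral_congr_ae (Filter.Eventually.of_forall fun ξ => ?_)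
    refine integral_congr_ae (Filter.Eventually.of_forall fun η => ?_)
    simp only [hg, wave, wt]
    ring
  · refine (integrable_wt_mul g).bdd_mul (c := 1) (Measurable.aestronglyMeasurable ?_)
      (Filter.Eventually.of_forall fun z => (norm_wave v z).le)
    unfold wave; fun_prop

/-- Derivative Strichartz estimate:
`‖D_x^{1/8} D_y^{1/8} U(t) u₀‖_{L⁴_{t,x,y}} ≤ C ‖u₀‖_{L²}` for Schwartz data. -/
theorem strichartz_DxDyU :
    ∃ C : ℝ, 0 < C ∧ ∀ u₀ : SchwartzMap (ℝ × ℝ) ℂ,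
      l4norm3 (DxDyU (fun x y => u₀ (x, y))) ≤
        ENNReal.ofReal C * l2norm2 (fun x y => u₀ (x, y)) := by
  refine ⟨2 * Real.pi * √|weightConst| + 1, by positivity, fun u₀ => ?_⟩
  obtain ⟨g, hg⟩ := exists_schwartz_fxy2 u₀
  have hgf : ∀ ζ : ℝ × ℝ, g ζ = fxy2 (fun x y => u₀ (x, y)) ζ.1 ζ.2 := fun ζ => by
    rw [hg, fxy2_eq]
  have hA : ∫⁻ z, ‖u₀ z‖ₑ ^ 2 ≠ ⊤ := by
    have h := (u₀.memLp 2 volume).eLpNorm_lt_top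
    rw [eLpNorm_lt_top_iff_lintegral_rpow_enorm_lt_top (by norm_num) (by norm_num)] at h
    simpa using h.ne
  have hP := fxy2_plancherel u₀
  simp_rw [← hgf] at hP
  rw [← ENNReal.ofReal_toReal hA, ← ENNReal.ofReal_mul (by positivity),
    ← ENNReal.ofReal_mul (by positivity)] at hP
  set A := (∫⁻ z, ‖u₀ z‖ₑ ^ 2).toReal with hAdef
  have hA0 : 0 ≤ A := ENNReal.toReal_nonneg
  have hD := dual_full g g.continuous.measurable (integrable_wt_mul g)
    (hP.trans_lt ENNReal.ofReal_lt_top).ne _ (DxDyU_eq u₀ g hgf)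
  have hγ := ENNReal.toReal_le_of_le_ofReal (by positivity) hP
  set y := 2 * Real.pi * √|weightConst| * √A with hy
  have hy0 : 0 ≤ y := by positivity
  have hy4 : ((∫⁻ ζ, ‖g ζ‖ₑ ^ 2).toReal * weightConst) ^ 2 ≤ y ^ 4 := by
    have e : y ^ 4 = (2 * Real.pi * (2 * Real.pi) * A * |weightConst|) ^ 2 := by
      have h1 := Real.sq_sqrt hA0
      have h2 := Real.sq_sqrt (abs_nonneg weightConst)
      calc y ^ 4 = (2 * Real.pi * (2 * Real.pi) * √A ^ 2 * √|weightConst| ^ 2) ^ 2 := by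
            rw [hy]; ring
        _ = _ := by rw [h1, h2]
    rw [e, ← sq_abs, abs_mul, abs_of_nonneg ENNReal.toReal_nonneg]
    gcongr
  have hl2 : l2norm2 (fun x y => u₀ (x, y)) = ENNReal.ofReal √A := by
    have : l2norm2 (fun x y => u₀ (x, y)) = (∫⁻ z, ‖u₀ z‖ₑ ^ 2) ^ ((1 : ℝ) / 2) := by
      unfold l2norm2
      simp only [ENNReal.rpow_two]
      rfl
    rw [this, ← ENNReal.ofReal_toReal hA, ← hAdef, ENNReal.ofReal_rpow_of_nonneg hA0 (by norm_num),
      Real.sqrt_eq_rpow]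
  have hl4 : l4norm3 (DxDyU (fun x y => u₀ (x, y))) ≤ ENNReal.ofReal y := by
    have e : l4norm3 (DxDyU (fun x y => u₀ (x, y))) =
        (∫⁻ v : ℝ × ℝ × ℝ, ‖DxDyU (fun x y => u₀ (x, y)) v.1 v.2.1 v.2.2‖ₑ ^ 4) ^ ((1 : ℝ) / 4) := by
      unfold l4norm3
      congr 1
      refine lintegral_congr fun v => ?_
      rw [show (4 : ℝ) = ((4 : ℕ) : ℝ) by norm_num, ENNReal.rpow_natCast]
      rfl
    rw [e]
    refine (ENNReal.rpow_le_rpow (hD.trans (ENNReal.ofReal_le_ofReal hy4)) (by norm_num)).trans ?_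
    rw [ENNReal.ofReal_pow hy0, ← ENNReal.rpow_natCast, ← ENNReal.rpow_mul]
    norm_num
  rw [hl2, ← ENNReal.ofReal_mul (by positivity)]
  refine hl4.trans (ENNReal.ofReal_le_ofReal ?_)
  rw [hy]
  gcongr
  linarith
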